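/- arXiv:1312.2567 — 3 statements merged into one kernel-verified Lean document; each statement's English description precedes it below -/
import Mathlib

section
/- Let Q be an M-invariant, adapted distribution on \Xi = \mathcal{P}(B_1) \times B_1 with Lebesgue intensity (a CP distribution), where M(\mu,x) = (T_{D(x)}^{\square}\mu, T_{D(x)}(x)) is the dyadic magnification operator. Then for Q-almost every ergodic component Q_\alpha of Q (with respect to M), the intensity measure [Q_\alpha] equals normalized Lebesgue measure on B_1. -/
open MeasureTheory Filter Topology

/-- `B₁ = [-1,1]^d`. -/
abbrev UnitCube (d : ℕ) : Set (Fin d → ℝ) := Set.Icc (fun _ => (-1:ℝ)) (fun _ => (1:ℝ))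

noncomputable instance (d : ℕ) : MeasurableSpace (ProbabilityMeasure (UnitCube d)) := borel _
instance (d : ℕ) : BorelSpace (ProbabilityMeasure (UnitCube d)) := ⟨rfl⟩

/-- `Ξ = 𝒫(B₁) × B₁`. -/
abbrev Xi (d : ℕ) := ProbabilityMeasure (UnitCube d) × UnitCube d

/-- The homothety mapping the first-level dyadic cube containing a point of `B₁`
onto `B₁` (applied coordinatewise). -/
noncomputable def cubeExpand (d : ℕ) (x : UnitCube d) : UnitCube d :=
  ⟨fun i => if (x : Fin d → ℝ) i < 0 then 2 * (x : Fin d → ℝ) i + 1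
            else 2 * (x : Fin d → ℝ) i - 1, by
    obtain ⟨h₁, h₂⟩ := x.2
    refine ⟨fun i => ?_, fun i => ?_⟩ <;>
      · have a := h₁ i
        have b := h₂ i
        simp only at a b ⊢
        split_ifs <;> linarith⟩

/-- The first-level dyadic cube of `B₁` containing `x` (as a subset of `B₁`). -/
def cubeOf (d : ℕ) (x : UnitCube d) : Set (UnitCube d) :=
  {y | ∀ i, ((y : Fin d → ℝ) i < 0 ↔ (x : Fin d → ℝ) i < 0)}

open scoped Classical in
/-- The dyadic magnification operator `M(μ,x) = (T_{D(x)}^□ μ, T_{D(x)} x)` on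
`Ξ = 𝒫(B₁) × B₁`: the measure component is the normalized pushforward of `μ`
restricted to the first-level dyadic cube `D(x)` containing `x`, rescaled to `B₁`
(with a junk value when the normalization is undefined). -/
noncomputable def magnify (d : ℕ) (p : Xi d) : Xi d :=
  if h : IsProbabilityMeasure
      ((((p.1 : Measure (UnitCube d)) (cubeOf d p.2))⁻¹ •
        ((p.1 : Measure (UnitCube d)).restrict (cubeOf d p.2)).map (cubeExpand d))) then
    (⟨_, h⟩, cubeExpand d p.2)
  else (p.1, cubeExpand d p.2)

/-- Adaptedness: `∫ f(ν,x) dQ(ν,x) = ∫∫ f(ν,x) dν(x) dQ̄(ν)` for all continuous `f`. -/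
def Adapted (d : ℕ) (Q : Measure (Xi d)) : Prop :=
  ∀ f : C(Xi d, ℝ),
    (∫ p, f p ∂Q) =
      ∫ ν, (∫ x, f (ν, x) ∂(ν : Measure (UnitCube d))) ∂(Q.map Prod.fst)

/-- Normalized Lebesgue measure on `B₁`. -/
noncomputable def normLeb (d : ℕ) : Measure (UnitCube d) :=
  ((2 : ENNReal) ^ d)⁻¹ • (volume : Measure (Fin d → ℝ)).comap Subtype.val

/-- The intensity measure `[Q](A) = ∫ μ(A) dQ̄(μ)` equals normalized Lebesgue measure. -/
def HasLebesgueIntensity (d : ℕ) (Q : Measure (Xi d)) : Prop :=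
  ∀ A : Set (UnitCube d), MeasurableSet A →
    (∫⁻ ν, (ν : Measure (UnitCube d)) A ∂(Q.map Prod.fst)) = normLeb d A

/-- A CP distribution: an `M`-invariant, adapted probability distribution on `Ξ`
with normalized-Lebesgue intensity. -/
def IsCPD (d : ℕ) (Q : Measure (Xi d)) : Prop :=
  IsProbabilityMeasure Q ∧ MeasurePreserving (magnify d) Q Q ∧
    Adapted d Q ∧ HasLebesgueIntensity d Q


theorem sum_sq_aux {X : Type*} [MeasurableSpace X] (Q : Measure X) [IsProbabilityMeasure Q]
    (M : X → X) (hM : MeasurePreserving M Q Q) (D : X → ℝ) (hD : Measurable D) (B : ℝ)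
    (hB : ∀ x, |D x| ≤ B) (horth : ∀ m, ∫ x, D x * D (M^[m+1] x) ∂Q = 0) (N : ℕ) :
    ∫ x, (∑ n ∈ Finset.range N, D (M^[n] x))^2 ∂Q = N * ∫ x, (D x)^2 ∂Q := by
  have hmn : ∀ n, Measurable fun x => D (M^[n] x) := fun n => hD.comp (hM.measurable.iterate n)
  have hB0 : 0 ≤ B := by
    obtain ⟨x⟩ : Nonempty X := Q.nonempty_of_neZero
    exact (abs_nonneg _).trans (hB x)
  have bint : ∀ f : X → ℝ, Measurable f → ∀ C : ℝ, (∀ x, |f x| ≤ C) → Integrable f Q :=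
    fun f hf C hC => Integrable.of_bound hf.aestronglyMeasurable C
      (Eventually.of_forall fun x => by simpa using hC x)
  have hSm : ∀ N, Measurable fun x => ∑ n ∈ Finset.range N, D (M^[n] x) := fun N =>
    Finset.measurable_fun_sum _ fun n _ => hmn n
  have hSb : ∀ N x, |∑ n ∈ Finset.range N, D (M^[n] x)| ≤ N * B := fun N x => by
    refine (Finset.abs_sum_le_sum_abs _ _).trans ?_
    refine (Finset.sum_le_sum (fun n _ => hB _)).trans (by simp)
  induction N with
  | zero => simp
  | succ N ih =>
    have e : ∀ x, (∑ n ∈ Finset.range (N+1), D (M^[n] x))^2 =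
        (D x)^2 + 2 * (∑ n ∈ Finset.range N, D x * D (M^[n+1] x))
          + (∑ n ∈ Finset.range N, D (M^[n] (M x)))^2 := fun x => by
      rw [Finset.sum_range_succ', ← Finset.mul_sum]
      simp only [Function.iterate_succ_apply, Function.iterate_zero, id]
      ring
    simp_rw [e]
    have i1 : Integrable (fun x => (D x)^2) Q := bint _ (hD.pow_const 2) (B^2) fun x => by
      rw [abs_pow]; exact pow_le_pow_left₀ (abs_nonneg _) (hB x) 2
    have i2' : ∀ n, Integrable (fun x => D x * D (M^[n+1] x)) Q := fun n =>
      bint _ (hD.mul (hmn (n+1))) (B*B) fun x => by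
        rw [abs_mul]; exact mul_le_mul (hB _) (hB _) (abs_nonneg _) hB0
    have i2 : Integrable (fun x => 2 * (∑ n ∈ Finset.range N, D x * D (M^[n+1] x))) Q :=
      (integrable_finsetSum _ fun n _ => i2' n).const_mul 2
    have i3 : Integrable (fun x => (∑ n ∈ Finset.range N, D (M^[n] (M x)))^2) Q :=
      bint _ (((hSm N).comp hM.measurable).pow_const 2) ((N*B)^2) fun x => by
        rw [abs_pow]; exact pow_le_pow_left₀ (abs_nonneg _) (hSb N _) 2
    rw [integral_add (by exact i1.add i2) i3, integral_add i1 i2, integral_const_mul,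
      integral_finsetSum _ (fun n _ => i2' n)]
    have : ∫ x, (∑ n ∈ Finset.range N, D (M^[n] (M x)))^2 ∂Q
        = ∫ x, (∑ n ∈ Finset.range N, D (M^[n] x))^2 ∂Q := by
      conv_rhs => rw [← hM.map_eq]
      rw [integral_map hM.aemeasurable]
      exact ((hSm N).pow_const 2).aestronglyMeasurable
    rw [this, ih]
    simp only [horth]
    push_cast
    simp
    ring

theorem ae_integral_zero {X : Type*} [MeasurableSpace X] (Q : Measure X) [IsProbabilityMeasure Q]
    (M : X → X) (hM : MeasurePreserving M Q Q) (D : X → ℝ) (hD : Measurable D) (B : ℝ)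
    (hB : ∀ x, |D x| ≤ B) (horth : ∀ m, ∫ x, D x * D (M^[m+1] x) ∂Q = 0)
    (Qc : X → Measure X) (hprob : ∀ p, IsProbabilityMeasure (Qc p))
    (hmeas : ∀ A : Set X, MeasurableSet A → Measurable fun p => Qc p A)
    (hinv : ∀ᵐ p ∂Q, MeasurePreserving M (Qc p) (Qc p))
    (hdecomp : ∀ A : Set X, MeasurableSet A → Q A = ∫⁻ p, Qc p A ∂Q) :
    ∀ᵐ p ∂Q, ∫ x, D x ∂(Qc p) = 0 := by
  have hκ : Measurable Qc := Measure.measurable_of_measurable_coe _ hmeas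
  have hQ : Q = Q.bind Qc := by
    ext A hA
    rw [Measure.bind_apply hA hκ.aemeasurable, hdecomp A hA]
  have hmn : ∀ n, Measurable fun x => D (M^[n] x) := fun n => hD.comp (hM.measurable.iterate n)
  have hSm : ∀ N, Measurable fun x => ∑ n ∈ Finset.range N, D (M^[n] x) := fun N =>
    Finset.measurable_fun_sum _ fun n _ => hmn n
  have hSb : ∀ N x, |∑ n ∈ Finset.range N, D (M^[n] x)| ≤ N * B := fun N x => by
    refine (Finset.abs_sum_le_sum_abs _ _).trans ?_
    refine (Finset.sum_le_sum (fun n _ => hB _)).trans (by simp)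
  have hSb2 : ∀ N x, |(∑ n ∈ Finset.range N, D (M^[n] x))^2| ≤ (N * B)^2 := fun N x => by
    rw [abs_pow]; exact pow_le_pow_left₀ (abs_nonneg _) (hSb N _) 2
  have bint : ∀ P : Measure X, IsProbabilityMeasure P → ∀ f : X → ℝ, Measurable f → ∀ C : ℝ,
      (∀ x, |f x| ≤ C) → Integrable f P :=
    fun P _ f hf C hC => Integrable.of_bound hf.aestronglyMeasurable C
      (Eventually.of_forall fun x => by simpa using hC x)
  set V := ∫ x, (D x)^2 ∂Q with hV
  have hV0 : 0 ≤ V := integral_nonneg fun x => sq_nonneg _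
  -- pointwise bound
  have key : ∀ N : ℕ, ∀ᵐ p ∂Q, ENNReal.ofReal ((N * ∫ x, D x ∂(Qc p))^2) ≤
      ∫⁻ x, ENNReal.ofReal ((∑ n ∈ Finset.range N, D (M^[n] x))^2) ∂(Qc p) := fun N => by
    filter_upwards [hinv] with p hp
    have := hprob p
    have iS := bint (Qc p) this _ (hSm N) _ (hSb N)
    have iS2 := bint (Qc p) this _ ((hSm N).pow_const 2) _ (hSb2 N)
    rw [← ofReal_integral_eq_lintegral_ofReal iS2 (Eventually.of_forall fun x => sq_nonneg _)]
    apply ENNReal.ofReal_le_ofReal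
    have e : ∫ x, ∑ n ∈ Finset.range N, D (M^[n] x) ∂(Qc p) = N * ∫ x, D x ∂(Qc p) := by
      rw [integral_finsetSum _ (fun n _ => bint (Qc p) this _ (hmn n) B (fun x => hB _))]
      have : ∀ n, ∫ x, D (M^[n] x) ∂(Qc p) = ∫ x, D x ∂(Qc p) := fun n => by
        conv_rhs => rw [← (hp.iterate n).map_eq]
        rw [integral_map (hp.iterate n).aemeasurable hD.aestronglyMeasurable]
      simp [this]
    set c := N * ∫ x, D x ∂(Qc p)
    have h0 : 0 ≤ ∫ x, ((∑ n ∈ Finset.range N, D (M^[n] x)) - c)^2 ∂(Qc p) :=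
      integral_nonneg fun x => sq_nonneg _
    have e2 : ∀ x, ((∑ n ∈ Finset.range N, D (M^[n] x)) - c)^2 =
      (∑ n ∈ Finset.range N, D (M^[n] x))^2 - 2 * c * (∑ n ∈ Finset.range N, D (M^[n] x)) + c^2 :=
      fun x => by ring
    simp_rw [e2] at h0
    rw [integral_add (by exact iS2.sub (iS.const_mul _)) (integrable_const _),
      integral_sub iS2 (iS.const_mul _), integral_const_mul, e] at h0
    simp at h0
    nlinarith
  have hJ : Measurable fun p => ∫ x, D x ∂(Qc p) := by
    have := (hD.stronglyMeasurable).integral_kernel (κ := (⟨Qc, hκ⟩ : ProbabilityTheory.Kernel X X))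
    exact this.measurable
  have key2 : ∀ N : ℕ, ∫⁻ p, ENNReal.ofReal ((N * ∫ x, D x ∂(Qc p))^2) ∂Q ≤ ENNReal.ofReal (N * V) := fun N => by
    refine (lintegral_mono_ae (key N)).trans ?_
    have hm : Measurable fun x => ENNReal.ofReal ((∑ n ∈ Finset.range N, D (M^[n] x))^2) :=
      ((hSm N).pow_const 2).ennreal_ofReal
    rw [← Measure.lintegral_bind hκ.aemeasurable hm.aemeasurable, ← hQ,
      ← ofReal_integral_eq_lintegral_ofReal (bint Q inferInstance _ ((hSm N).pow_const 2) _ (hSb2 N)) (Eventually.of_forall fun x => sq_nonneg _),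
      sum_sq_aux Q M hM D hD B hB horth]
  have hJb : ∀ p, |∫ x, D x ∂(Qc p)| ≤ B := fun p => by
    have := hprob p
    have := norm_integral_le_of_norm_le_const (μ := Qc p) (f := D) (C := B) (Eventually.of_forall fun x => by simpa using hB x)
    simpa using this
  have iJ2 : Integrable (fun p => (∫ x, D x ∂(Qc p))^2) Q :=
    bint Q inferInstance _ (hJ.pow_const 2) (B^2) fun x => by
        rw [abs_pow]; exact pow_le_pow_left₀ (abs_nonneg _) (hJb _) 2
  have key3 : ∀ N : ℕ, (N:ℝ)^2 * ∫ p, (∫ x, D x ∂(Qc p))^2 ∂Q ≤ N * V := fun N => by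
    have h := key2 N
    simp_rw [mul_pow] at h
    rw [← ofReal_integral_eq_lintegral_ofReal (iJ2.const_mul _)
      (Eventually.of_forall fun x => by positivity), integral_const_mul] at h
    exact (ENNReal.ofReal_le_ofReal_iff (by positivity)).1 h
  have hz : ∫ p, (∫ x, D x ∂(Qc p))^2 ∂Q = 0 := by
    set W := ∫ p, (∫ x, D x ∂(Qc p))^2 ∂Q with hW
    have hW0 : 0 ≤ W := integral_nonneg fun x => sq_nonneg _
    by_contra hne
    have hpos : 0 < W := lt_of_le_of_ne hW0 (Ne.symm hne)
    obtain ⟨N, hN⟩ := exists_nat_gt (V / W)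
    have h3 := key3 N
    rw [div_lt_iff₀ hpos] at hN
    have hNpos : (0:ℝ) < N := by
      by_contra h
      have : (N:ℝ) * W ≤ 0 := mul_nonpos_of_nonpos_of_nonneg (not_lt.1 h) hW0
      linarith
    nlinarith
  rw [integral_eq_zero_iff_of_nonneg (fun x => sq_nonneg _) iJ2] at hz
  filter_upwards [hz] with p hp
  simpa using hp


theorem measurable_pm_apply (d : ℕ) (A : Set (UnitCube d)) (hA : MeasurableSet A) :
    Measurable fun ν : ProbabilityMeasure (UnitCube d) => (ν : Measure (UnitCube d)) A := by
  have h : Measurable fun ν : ProbabilityMeasure (UnitCube d) => (ν : Measure (UnitCube d)) := by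
    refine Measurable.measure_of_isPiSystem_of_isProbabilityMeasure
      (S := {s | IsOpen s}) (BorelSpace.measurable_eq) isPiSystem_isOpen ?_
    intro G hG
    have : LowerSemicontinuous fun ν : ProbabilityMeasure (UnitCube d) => (ν : Measure (UnitCube d)) G := by
      rw [lowerSemicontinuous_iff_le_liminf]
      intro ν
      exact ProbabilityMeasure.le_liminf_measure_open_of_tendsto tendsto_id hG
    exact this.measurable
  exact (Measure.measurable_coe hA).comp h

/-- the identity kernel -/
noncomputable def pmKernel (d : ℕ) :
    ProbabilityTheory.Kernel (ProbabilityMeasure (UnitCube d)) (UnitCube d) :=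
  ⟨fun ν => (ν : Measure (UnitCube d)), Measure.measurable_of_measurable_coe _ (measurable_pm_apply d)⟩

instance (d : ℕ) : ProbabilityTheory.IsMarkovKernel (pmKernel d) := ⟨fun ν => ν.2⟩

open scoped ProbabilityTheory in
theorem adapted_eq (d : ℕ) (Q : Measure (Xi d)) [IsProbabilityMeasure Q] (h : Adapted d Q) :
    Q = (Q.map Prod.fst) ⊗ₘ (pmKernel d) := by
  have : IsProbabilityMeasure (Q.map Prod.fst) := Measure.isProbabilityMeasure_map measurable_fst.aemeasurable
  apply ext_of_forall_integral_eq_of_IsFiniteMeasure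
  intro f
  rw [Measure.integral_compProd (f.integrable _)]
  exact h f.toContinuousMap

def digitSet (d : ℕ) (c : Fin d → Bool) : Set (UnitCube d) :=
  {y | ∀ i, ((y : Fin d → ℝ) i < 0 ↔ c i = true)}

theorem measurableSet_digitSet (d : ℕ) (c : Fin d → Bool) : MeasurableSet (digitSet d c) := by
  have : digitSet d c = ⋂ i, {y : UnitCube d | ((y : Fin d → ℝ) i < 0 ↔ c i = true)} := by
    ext; simp [digitSet]
  rw [this]
  refine MeasurableSet.iInter fun i => ?_
  have hm : MeasurableSet {y : UnitCube d | (y : Fin d → ℝ) i < 0} :=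
    measurableSet_lt ((measurable_pi_apply i).comp measurable_subtype_coe) measurable_const
  cases hc : c i
  · have e : {y : UnitCube d | ((y : Fin d → ℝ) i < 0 ↔ false = true)} = {y : UnitCube d | (y : Fin d → ℝ) i < 0}ᶜ := by
      ext y; simp
    rw [e]; exact hm.compl
  · have e : {y : UnitCube d | ((y : Fin d → ℝ) i < 0 ↔ true = true)} = {y : UnitCube d | (y : Fin d → ℝ) i < 0} := by
      ext y; simp
    rw [e]; exact hm

theorem measurable_cubeExpand (d : ℕ) : Measurable (cubeExpand d) := by
  refine Measurable.subtype_mk (measurable_pi_lambda _ fun i => ?_)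
  have hi : Measurable fun y : UnitCube d => (y : Fin d → ℝ) i := (measurable_pi_apply i).comp measurable_subtype_coe
  exact Measurable.ite (measurableSet_lt hi measurable_const) ((hi.const_mul 2).add_const 1) ((hi.const_mul 2).sub_const 1)

open scoped Classical in
noncomputable def digit (d : ℕ) (x : UnitCube d) : Fin d → Bool := fun i => decide ((x : Fin d → ℝ) i < 0)

theorem mem_digitSet_iff (d : ℕ) (c : Fin d → Bool) (x : UnitCube d) : x ∈ digitSet d c ↔ digit d x = c := by
  constructor
  · intro h; funext i
    have := h i
    rw [Bool.eq_iff_iff, ← this]; simp [digit]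
  · rintro rfl i; simp [digit]

theorem cubeOf_eq (d : ℕ) (x : UnitCube d) : cubeOf d x = digitSet d (digit d x) := by
  ext y; simp [cubeOf, digitSet, digit]

theorem magnify_snd (d : ℕ) (p : Xi d) : (magnify d p).2 = cubeExpand d p.2 := by
  unfold magnify; split_ifs <;> rfl

theorem magnify_iter_snd (d : ℕ) (m : ℕ) (p : Xi d) :
    ((magnify d)^[m] p).2 = (cubeExpand d)^[m] p.2 := by
  induction m generalizing p with
  | zero => rfl
  | succ m ih => rw [Function.iterate_succ_apply, Function.iterate_succ_apply, ih, magnify_snd]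

/-- the normalised piece -/
noncomputable def piece (d : ℕ) (ν : Measure (UnitCube d)) (c : Fin d → Bool) : Measure (UnitCube d) :=
  (ν (digitSet d c))⁻¹ • (ν.restrict (digitSet d c)).map (cubeExpand d)

theorem piece_prob (d : ℕ) (ν : Measure (UnitCube d)) [IsFiniteMeasure ν] (c : Fin d → Bool)
    (h : ν (digitSet d c) ≠ 0) : IsProbabilityMeasure (piece d ν c) := by
  constructor
  rw [piece, Measure.smul_apply, Measure.map_apply (measurable_cubeExpand d) MeasurableSet.univ]
  simp [ENNReal.inv_mul_cancel h (measure_ne_top _ _)]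

theorem magnify_eq (d : ℕ) (ν : ProbabilityMeasure (UnitCube d)) (c : Fin d → Bool)
    (h : (ν : Measure (UnitCube d)) (digitSet d c) ≠ 0) (x : UnitCube d) (hx : x ∈ digitSet d c) :
    magnify d (ν, x) = (⟨piece d ν c, piece_prob d ν c h⟩, cubeExpand d x) := by
  have hc : cubeOf d x = digitSet d c := by rw [cubeOf_eq, (mem_digitSet_iff d c x).1 hx]
  unfold magnify
  have hp := piece_prob d ν c h
  rw [dif_pos (by simp only [hc]; exact hp)]
  refine Prod.ext (Subtype.ext ?_) rfl
  simp only [hc]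
  rfl

structure Good (d : ℕ) (H : Xi d → ℝ) : Prop where
  meas : Measurable H
  bdd : ∃ B, ∀ p, |H p| ≤ B
  zero : ∀ ν : ProbabilityMeasure (UnitCube d), ∫ x, H (ν, x) ∂(ν : Measure (UnitCube d)) = 0

open scoped Classical in
theorem Good.step {d : ℕ} (hM : Measurable (magnify d)) {H : Xi d → ℝ} (hH : Good d H) (c : Fin d → Bool) :
    Good d (fun p => (if p.2 ∈ digitSet d c then (1:ℝ) else 0) * H (magnify d p)) := by
  have hme : Measurable fun p : Xi d => (if p.2 ∈ digitSet d c then (1:ℝ) else 0) :=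
    Measurable.ite (measurable_snd (measurableSet_digitSet d c)) measurable_const measurable_const
  refine ⟨hme.mul (hH.meas.comp hM), ?_, ?_⟩
  · obtain ⟨B, hB⟩ := hH.bdd
    refine ⟨B, fun p => ?_⟩
    have := hB (magnify d p)
    have h0 := (abs_nonneg _).trans this
    split_ifs <;> simpa
  · intro ν
    have e : (fun x => (if x ∈ digitSet d c then (1:ℝ) else 0) * H (magnify d (ν, x))) =
        (digitSet d c).indicator (fun x => H (magnify d (ν, x))) := by
      ext x; by_cases hx : x ∈ digitSet d c <;> simp [hx]
    simp only
    rw [e, integral_indicator (measurableSet_digitSet d c)]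
    by_cases h : (ν : Measure (UnitCube d)) (digitSet d c) = 0
    · rw [Measure.restrict_eq_zero.2 h]; simp
    · rw [setIntegral_congr_fun (g := fun x => H (⟨piece d ν c, piece_prob d ν c h⟩, cubeExpand d x)) (measurableSet_digitSet d c)
        (fun x hx => by simp only; rw [magnify_eq d ν c h x hx])]
      have hz := hH.zero ⟨piece d ν c, piece_prob d ν c h⟩
      simp only [ProbabilityMeasure.coe_mk] at hz
      change ∫ x, H (⟨piece d ν c, piece_prob d ν c h⟩, x) ∂((ν : Measure (UnitCube d)) (digitSet d c))⁻¹ • ((ν : Measure (UnitCube d)).restrict (digitSet d c)).map (cubeExpand d) = 0 at hz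
      rw [integral_smul_measure, integral_map (measurable_cubeExpand d).aemeasurable
        (by exact (hH.meas.comp measurable_prodMk_left).aestronglyMeasurable)] at hz
      have hne : ((ν : Measure (UnitCube d)) (digitSet d c))⁻¹.toReal ≠ 0 := by
        rw [ENNReal.toReal_ne_zero]
        exact ⟨by simp, by simpa using h⟩
      exact (smul_eq_zero.1 hz).resolve_left hne

theorem Good.integrable {d : ℕ} {H : Xi d → ℝ} (hH : Good d H) (ν : ProbabilityMeasure (UnitCube d)) :
    Integrable (fun x => H (ν, x)) (ν : Measure (UnitCube d)) := by
  obtain ⟨B, hB⟩ := hH.bdd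
  exact Integrable.of_bound (hH.meas.comp measurable_prodMk_left).aestronglyMeasurable B
      (Eventually.of_forall fun x => by simpa using hB _)

theorem Good.comp {d : ℕ} (hM : Measurable (magnify d)) {H : Xi d → ℝ} (hH : Good d H) :
    Good d (fun p => H (magnify d p)) := by
  classical
  refine ⟨hH.meas.comp hM, ?_, ?_⟩
  · obtain ⟨B, hB⟩ := hH.bdd
    exact ⟨B, fun p => hB _⟩
  · intro ν
    have e : ∀ x, H (magnify d (ν, x)) = ∑ c : Fin d → Bool, (if x ∈ digitSet d c then (1:ℝ) else 0) * H (magnify d (ν, x)) := fun x => by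
      simp_rw [mem_digitSet_iff]
      simp
    rw [integral_congr_ae (Eventually.of_forall e)]
    rw [integral_finsetSum _ (fun c _ => (hH.step hM c).integrable ν)]
    exact Finset.sum_eq_zero fun c _ => (hH.step hM c).zero ν

theorem Good.iter {d : ℕ} (hM : Measurable (magnify d)) {H : Xi d → ℝ} (hH : Good d H) (m : ℕ) :
    Good d (fun p => H ((magnify d)^[m] p)) := by
  induction m with
  | zero => exact hH
  | succ m ih => simpa only [Function.iterate_succ_apply] using ih.comp hM

/-- dyadic cylinder -/
def cyl (d : ℕ) : List (Fin d → Bool) → Set (UnitCube d)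
  | [] => Set.univ
  | c :: w => digitSet d c ∩ (cubeExpand d) ⁻¹' (cyl d w)

theorem measurableSet_cyl (d : ℕ) (w : List (Fin d → Bool)) : MeasurableSet (cyl d w) := by
  induction w with
  | nil => exact MeasurableSet.univ
  | cons c w ih => exact (measurableSet_digitSet d c).inter (measurable_cubeExpand d ih)

open scoped Classical in
theorem Good.cyl {d : ℕ} (hM : Measurable (magnify d)) {H : Xi d → ℝ} (hH : Good d H)
    (w : List (Fin d → Bool)) (m : ℕ) :
    Good d (fun p => (if p.2 ∈ cyl d w then (1:ℝ) else 0) * H ((magnify d)^[w.length + m] p)) := by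
  induction w with
  | nil => simpa [_root_.cyl] using hH.iter hM m
  | cons c w ih =>
    convert ih.step hM c using 2 with p
    rw [magnify_snd, ← Function.iterate_succ_apply]
    have : (c :: w).length + m = (w.length + m).succ := by simp; omega
    rw [this]
    by_cases h1 : p.2 ∈ digitSet d c <;> by_cases h2 : cubeExpand d p.2 ∈ _root_.cyl d w <;>
      simp [_root_.cyl, h1, h2]

open scoped Classical in
noncomputable def Dw (d : ℕ) (w : List (Fin d → Bool)) (p : Xi d) : ℝ :=
  (if p.2 ∈ cyl d w then (1:ℝ) else 0) - (p.1 : Measure (UnitCube d)).real (cyl d w)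

theorem measurable_real_cyl (d : ℕ) (w : List (Fin d → Bool)) :
    Measurable fun p : Xi d => (p.1 : Measure (UnitCube d)).real (cyl d w) :=
  ((measurable_pm_apply d _ (measurableSet_cyl d w)).comp measurable_fst).ennreal_toReal

theorem good_Dw (d : ℕ) (w : List (Fin d → Bool)) : Good d (Dw d w) := by
  classical
  refine ⟨?_, ⟨2, fun p => ?_⟩, fun ν => ?_⟩
  · exact (Measurable.ite (measurable_snd (measurableSet_cyl d w)) measurable_const measurable_const).sub
      (measurable_real_cyl d w)
  · unfold Dw
    have h0 : 0 ≤ (p.1 : Measure (UnitCube d)).real (cyl d w) := measureReal_nonneg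
    have h1 : (p.1 : Measure (UnitCube d)).real (cyl d w) ≤ 1 := measureReal_le_one
    rw [abs_le]; split_ifs <;> constructor <;> linarith
  · unfold Dw
    have e : (fun x => (if x ∈ cyl d w then (1:ℝ) else 0)) = (cyl d w).indicator 1 := by
      ext x; by_cases hx : x ∈ cyl d w <;> simp [hx]
    dsimp only
    rw [integral_sub, integral_const]
    · simp only [e]
      rw [integral_indicator_one (measurableSet_cyl d w)]; simp
    · simp only [e]
      exact (integrable_const (1:ℝ)).indicator (measurableSet_cyl d w)
    · exact integrable_const _

theorem good_Dw_mul (d : ℕ) (hM : Measurable (magnify d)) (w : List (Fin d → Bool)) (m : ℕ) :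
    Good d (fun p => Dw d w p * Dw d w ((magnify d)^[w.length + m] p)) := by
  classical
  have hg := good_Dw d w
  have h1 := hg.cyl hM w m
  have h2 := hg.iter hM (w.length + m)
  refine ⟨hg.meas.mul h2.meas, ?_, fun ν => ?_⟩
  · obtain ⟨B, hB⟩ := hg.bdd
    refine ⟨B * B, fun p => ?_⟩
    rw [abs_mul]
    exact mul_le_mul (hB _) (hB _) (abs_nonneg _) ((abs_nonneg _).trans (hB p))
  · have e : ∀ x, Dw d w (ν, x) * Dw d w ((magnify d)^[w.length + m] (ν, x)) =
        (if x ∈ cyl d w then (1:ℝ) else 0) * Dw d w ((magnify d)^[w.length + m] (ν, x)) -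
        (ν : Measure (UnitCube d)).real (cyl d w) * Dw d w ((magnify d)^[w.length + m] (ν, x)) := fun x => by
      rw [← sub_mul]; rfl
    simp_rw [e]
    rw [integral_sub (h1.integrable ν) ((h2.integrable ν).const_mul _), integral_const_mul]
    rw [h1.zero ν, h2.zero ν]; simp

theorem normLeb_apply (d : ℕ) (A : Set (UnitCube d)) :
    normLeb d A = ((2 : ENNReal) ^ d)⁻¹ * volume ((Subtype.val : UnitCube d → Fin d → ℝ) '' A) := by
  rw [normLeb, Measure.smul_apply,
    (MeasurableEmbedding.subtype_coe measurableSet_Icc).comap_apply]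
  rfl

theorem normLeb_univ (d : ℕ) : normLeb d Set.univ = 1 := by
  rw [normLeb_apply, Set.image_univ, Subtype.range_coe]
  rw [Real.volume_Icc_pi]
  have : ∀ i : Fin d, ENNReal.ofReal ((1:ℝ) - (-1)) = 2 := fun i => by norm_num
  rw [Finset.prod_congr rfl (fun i _ => this i), Finset.prod_const, Finset.card_univ, Fintype.card_fin]
  exact ENNReal.inv_mul_cancel (pow_ne_zero _ two_ne_zero) (ENNReal.pow_ne_top ENNReal.ofNat_ne_top)

theorem normLeb_digit (d : ℕ) (c : Fin d → Bool) (B : Set (UnitCube d)) :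
    normLeb d (digitSet d c ∩ (cubeExpand d) ⁻¹' B) = ((2 : ENNReal) ^ d)⁻¹ * normLeb d B := by
  rw [normLeb_apply, normLeb_apply]
  congr 1
  set e : Fin d → ℝ := fun i => if c i then 1 else -1 with he
  have h1 : volume ((fun x : Fin d → ℝ => (2:ℝ) • x) ⁻¹' ((fun x => x + e) ⁻¹' ((Subtype.val : UnitCube d → Fin d → ℝ) '' B)))
      = ((2 : ENNReal) ^ d)⁻¹ * volume ((Subtype.val : UnitCube d → Fin d → ℝ) '' B) := by
    rw [Measure.addHaar_preimage_smul _ (by norm_num), measure_preimage_add_right]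
    congr 1
    simp only [Module.finrank_fintype_fun_eq_card, Fintype.card_fin]
    rw [abs_of_nonneg (by positivity), ENNReal.ofReal_inv_of_pos (by positivity),
      ENNReal.ofReal_pow (by norm_num)]
    simp
  rw [← h1]
  apply measure_congr
  have hne : ∀ᵐ x : Fin d → ℝ, ∀ i, x i ≠ 0 := by
    rw [ae_all_iff]
    intro i
    rw [ae_iff]
    simp only [not_not]
    exact Measure.pi_hyperplane (fun _ => (volume : Measure ℝ)) i 0
  filter_upwards [hne] with x hx
  apply propext
  change x ∈ Subtype.val '' (digitSet d c ∩ cubeExpand d ⁻¹' B) ↔ (2:ℝ) • x + e ∈ Subtype.val '' B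
  constructor
  · rintro ⟨y, ⟨hy, hyB⟩, rfl⟩
    refine ⟨_, hyB, ?_⟩
    funext i
    have := hy i
    simp only [cubeExpand, he, Pi.add_apply, Pi.smul_apply, smul_eq_mul]
    by_cases h : (y : Fin d → ℝ) i < 0
    · simp [h, this.1 h]
    · have h' : ¬ c i = true := fun hc => h (this.2 hc)
      simp only [h, h', if_false]; simp; ring
  · rintro ⟨b, hb, hbx⟩
    have hc : ∀ i, (c i = true → -1 ≤ x i ∧ x i < 0 ∧ (b : Fin d → ℝ) i = 2 * x i + 1) ∧
        (¬ c i = true → 0 ≤ x i ∧ x i ≤ 1 ∧ (b : Fin d → ℝ) i = 2 * x i - 1) := fun i => by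
      have hi := congrFun hbx i
      simp only [he, Pi.add_apply, Pi.smul_apply, smul_eq_mul] at hi
      have b1 : -1 ≤ (b : Fin d → ℝ) i := b.2.1 i
      have b2 : (b : Fin d → ℝ) i ≤ 1 := b.2.2 i
      constructor
      · intro h
        rw [if_pos h] at hi
        exact ⟨by linarith, lt_of_le_of_ne (by linarith) (hx i), hi⟩
      · intro h
        rw [if_neg h] at hi
        exact ⟨by linarith, by linarith, by linarith⟩
    have hxc : x ∈ UnitCube d := by
      constructor <;> intro i <;> by_cases h : c i = true
      · exact ((hc i).1 h).1
      · have := ((hc i).2 h).1; simp only; linarith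
      · have := ((hc i).1 h).2.1; simp only; linarith
      · exact ((hc i).2 h).2.1
    have hd : (⟨x, hxc⟩ : UnitCube d) ∈ digitSet d c := fun i => by
      by_cases h : c i = true
      · simp [h, ((hc i).1 h).2.1]
      · simp [h, ((hc i).2 h).1]
    refine ⟨⟨x, hxc⟩, ⟨hd, ?_⟩, rfl⟩
    have : cubeExpand d ⟨x, hxc⟩ = b := by
      apply Subtype.ext
      funext i
      simp only [cubeExpand]
      by_cases h : c i = true
      · rw [if_pos ((hc i).1 h).2.1, ((hc i).1 h).2.2]
      · rw [if_neg (not_lt.2 ((hc i).2 h).1), ((hc i).2 h).2.2]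
    change cubeExpand d ⟨x, hxc⟩ ∈ B
    rw [this]; exact hb

instance (d : ℕ) : IsProbabilityMeasure (normLeb d) := ⟨normLeb_univ d⟩

noncomputable def lebPM (d : ℕ) : ProbabilityMeasure (UnitCube d) := ⟨normLeb d, inferInstance⟩

theorem coe_lebPM (d : ℕ) : (lebPM d : Measure (UnitCube d)) = normLeb d := rfl

theorem normLeb_digitSet (d : ℕ) (c : Fin d → Bool) :
    normLeb d (digitSet d c) = ((2 : ENNReal) ^ d)⁻¹ := by
  have := normLeb_digit d c Set.univ
  simpa [normLeb_univ] using this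

theorem piece_leb (d : ℕ) (c : Fin d → Bool) : piece d (normLeb d) c = normLeb d := by
  ext B hB
  rw [piece, Measure.smul_apply, Measure.map_apply (measurable_cubeExpand d) hB,
    Measure.restrict_apply (measurable_cubeExpand d hB), Set.inter_comm, normLeb_digit,
    normLeb_digitSet, smul_eq_mul, ← mul_assoc, ENNReal.inv_mul_cancel, one_mul] <;> simp

theorem magnify_leb (d : ℕ) (x : UnitCube d) :
    magnify d (lebPM d, x) = (lebPM d, cubeExpand d x) := by
  rw [magnify_eq d (lebPM d) (digit d x) (by rw [coe_lebPM, normLeb_digitSet]; simp) x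
    ((mem_digitSet_iff d _ x).2 rfl)]
  exact Prod.ext (Subtype.ext (piece_leb d _)) rfl

theorem magnify_leb_iter (d : ℕ) (m : ℕ) (x : UnitCube d) :
    (magnify d)^[m] (lebPM d, x) = (lebPM d, (cubeExpand d)^[m] x) := by
  induction m generalizing x with
  | zero => rfl
  | succ m ih => rw [Function.iterate_succ_apply, Function.iterate_succ_apply, magnify_leb, ih]

noncomputable def word (d : ℕ) : ℕ → UnitCube d → List (Fin d → Bool)
  | 0, _ => []
  | n+1, x => digit d x :: word d n (cubeExpand d x)

theorem mem_cyl_word (d n : ℕ) (x : UnitCube d) : x ∈ cyl d (word d n x) := by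
  induction n generalizing x with
  | zero => trivial
  | succ n ih => exact ⟨(mem_digitSet_iff d _ x).2 rfl, ih _⟩

theorem close_of_mem_cyl (d n : ℕ) (x y : UnitCube d) (h : y ∈ cyl d (word d n x)) (i : Fin d) :
    2 ^ n * |(x : Fin d → ℝ) i - (y : Fin d → ℝ) i| ≤ 2 := by
  induction n generalizing x y with
  | zero =>
    have x1 : -1 ≤ (x : Fin d → ℝ) i := x.2.1 i
    have x2 : (x : Fin d → ℝ) i ≤ 1 := x.2.2 i
    have y1 : -1 ≤ (y : Fin d → ℝ) i := y.2.1 i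
    have y2 : (y : Fin d → ℝ) i ≤ 1 := y.2.2 i
    rw [pow_zero, one_mul, abs_le]; constructor <;> linarith
  | succ n ih =>
    obtain ⟨h1, h2⟩ := h
    have := ih _ _ h2
    have hy := h1 i
    simp only [digit, decide_eq_true_eq] at hy
    have e : (cubeExpand d x : Fin d → ℝ) i - (cubeExpand d y : Fin d → ℝ) i
        = 2 * ((x : Fin d → ℝ) i - (y : Fin d → ℝ) i) := by
      simp only [cubeExpand]
      by_cases hx : (x : Fin d → ℝ) i < 0
      · rw [if_pos hx, if_pos (hy.2 hx)]; ring
      · rw [if_neg hx, if_neg (fun h => hx (hy.1 h))]; ring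
    rw [e, abs_mul, abs_two] at this
    rw [pow_succ]; linarith

theorem exists_separating (d : ℕ) (x y : UnitCube d) (hxy : x ≠ y) :
    ∃ w, x ∈ cyl d w ∧ y ∉ cyl d w := by
  by_contra hcon
  push Not at hcon
  apply hxy
  apply Subtype.ext
  funext i
  by_contra hne
  have hpos : 0 < |(x : Fin d → ℝ) i - (y : Fin d → ℝ) i| := abs_pos.2 (sub_ne_zero.2 hne)
  obtain ⟨n, hn⟩ := pow_unbounded_of_one_lt (2 / |(x : Fin d → ℝ) i - (y : Fin d → ℝ) i|) (one_lt_two)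
  rw [div_lt_iff₀ hpos] at hn
  have := close_of_mem_cyl d n x y (hcon _ (mem_cyl_word d n x)) i
  linarith

theorem generateFrom_cyl (d : ℕ) :
    (inferInstance : MeasurableSpace (UnitCube d)) = MeasurableSpace.generateFrom (Set.range (cyl d)) := by
  have hle : MeasurableSpace.generateFrom (Set.range (cyl d)) ≤ (inferInstance : MeasurableSpace (UnitCube d)) := by
    apply MeasurableSpace.generateFrom_le
    rintro _ ⟨w, rfl⟩
    exact measurableSet_cyl d w
  have hsep : @MeasurableSpace.CountablySeparated (UnitCube d) (MeasurableSpace.generateFrom (Set.range (cyl d))) := by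
    refine @MeasurableSpace.CountablySeparated.mk _ (_) ⟨Set.range (cyl d), Set.countable_range _, ?_, ?_⟩
    · rintro s hs
      exact MeasurableSpace.measurableSet_generateFrom hs
    · intro x _ y _ h
      by_contra hxy
      obtain ⟨w, h1, h2⟩ := exists_separating d x y hxy
      exact h2 ((h _ ⟨w, rfl⟩).1 h1)
  have : StandardBorelSpace (UnitCube d) := measurableSet_Icc.standardBorel
  have hid : @Measurable (UnitCube d) (UnitCube d) _ (MeasurableSpace.generateFrom (Set.range (cyl d))) id :=
    measurable_id.mono le_rfl hle
  have := @Measurable.map_measurableSpace_eq (UnitCube d) (UnitCube d) _ _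
    (MeasurableSpace.generateFrom (Set.range (cyl d))) hsep id hid Function.surjective_id
  rwa [MeasurableSpace.map_id] at this

theorem cyl_inter (d : ℕ) (w v : List (Fin d → Bool)) (h : (cyl d w ∩ cyl d v).Nonempty) :
    ∃ u, cyl d u = cyl d w ∩ cyl d v := by
  induction w generalizing v with
  | nil => exact ⟨v, by simp [cyl]⟩
  | cons c w ih =>
    cases v with
    | nil => exact ⟨c :: w, by simp [cyl]⟩
    | cons c' v =>
      obtain ⟨x, ⟨h1, h2⟩, h3, h4⟩ := h
      have hcc : c = c' := by
        rw [← (mem_digitSet_iff d c x).1 h1, (mem_digitSet_iff d c' x).1 h3]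
      subst hcc
      obtain ⟨u, hu⟩ := ih v ⟨_, h2, h4⟩
      refine ⟨c :: u, ?_⟩
      simp only [cyl, hu, Set.preimage_inter]
      ext; simp; tauto

theorem isPiSystem_cyl (d : ℕ) : IsPiSystem (Set.range (cyl d)) := by
  rintro _ ⟨w, rfl⟩ _ ⟨v, rfl⟩ h
  exact cyl_inter d w v h

theorem map_snd_eq (d : ℕ) (Q : Measure (Xi d)) [IsProbabilityMeasure Q] (h : Adapted d Q)
    (hL : HasLebesgueIntensity d Q) : Q.map Prod.snd = normLeb d := by
  have : IsProbabilityMeasure (Q.map Prod.fst) := Measure.isProbabilityMeasure_map measurable_fst.aemeasurable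
  ext A hA
  rw [Measure.map_apply measurable_snd hA, ← hL A hA]
  conv_lhs => rw [adapted_eq d Q h]
  rw [Measure.compProd_apply (measurable_snd hA)]
  rfl

theorem integral_good (d : ℕ) (Q : Measure (Xi d)) [IsProbabilityMeasure Q] (h : Adapted d Q)
    {H : Xi d → ℝ} (hH : Good d H) : ∫ p, H p ∂Q = 0 := by
  have : IsProbabilityMeasure (Q.map Prod.fst) := Measure.isProbabilityMeasure_map measurable_fst.aemeasurable
  obtain ⟨B, hB⟩ := hH.bdd
  rw [adapted_eq d Q h, Measure.integral_compProd (Integrable.of_bound hH.meas.aestronglyMeasurable B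
      (Eventually.of_forall fun x => by simpa using hB _))]
  have : ∀ ν, ∫ x, H (ν, x) ∂(pmKernel d ν) = 0 := fun ν => hH.zero ν
  simp [this]

theorem main_cyl (d : ℕ) (Q : Measure (Xi d))
    (hQ : IsCPD d Q)
    (Qc : Xi d → Measure (Xi d))
    (hprob : ∀ p, IsProbabilityMeasure (Qc p))
    (hmeas : ∀ A : Set (Xi d), MeasurableSet A → Measurable fun p => Qc p A)
    (herg : ∀ᵐ p ∂Q, Ergodic (magnify d) (Qc p))
    (hdecomp : ∀ A : Set (Xi d), MeasurableSet A → Q A = ∫⁻ p, Qc p A ∂Q)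
    (w : List (Fin d → Bool)) :
    ∀ᵐ p ∂Q, (∫⁻ ν, (ν : Measure (UnitCube d)) (cyl d w) ∂((Qc p).map Prod.fst)) = normLeb d (cyl d w) := by
  obtain ⟨hQp, hM, hA, hL⟩ := hQ
  have hg := good_Dw d w
  obtain ⟨B, hB⟩ := hg.bdd
  have hiter : ∀ m, ((magnify d)^[w.length + 1])^[m+1] = (magnify d)^[w.length + (1 + (w.length+1) * m)] := fun m => by
    rw [← Function.iterate_mul]; congr 1; ring
  have hinv : ∀ᵐ p ∂Q, MeasurePreserving ((magnify d)^[w.length + 1]) (Qc p) (Qc p) := by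
    filter_upwards [herg] with p hp using hp.toMeasurePreserving.iterate _
  have H1 := ae_integral_zero Q ((magnify d)^[w.length + 1]) (hM.iterate _) (Dw d w) hg.meas B hB
    (fun m => by rw [hiter]; exact integral_good d Q hA (good_Dw_mul d hM.measurable w _))
    Qc hprob hmeas hinv hdecomp
  have hm2 : Measurable fun x : UnitCube d => Dw d w (lebPM d, x) := hg.meas.comp measurable_prodMk_left
  have H2 := ae_integral_zero Q ((magnify d)^[w.length + 1]) (hM.iterate _) (fun p => Dw d w (lebPM d, p.2))
    (hm2.comp measurable_snd) B (fun p => hB _)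
    (fun m => by
      rw [hiter]
      have hz := (good_Dw_mul d hM.measurable w (1 + (w.length+1) * m)).zero (lebPM d)
      simp only [magnify_leb_iter] at hz
      simp only [magnify_iter_snd]
      rw [coe_lebPM, ← map_snd_eq d Q hA hL, integral_map measurable_snd.aemeasurable] at hz
      · exact hz
      · exact (hm2.mul (hm2.comp ((measurable_cubeExpand d).iterate _))).aestronglyMeasurable)
    Qc hprob hmeas hinv hdecomp
  filter_upwards [H1, H2] with p h1 h2
  have := hprob p
  have bi : ∀ f : Xi d → ℝ, Measurable f → (∀ x, |f x| ≤ B) → Integrable f (Qc p) :=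
    fun f hf hC => Integrable.of_bound hf.aestronglyMeasurable B
      (Eventually.of_forall fun x => by simpa using hC x)
  have hs : ∫ q, (Dw d w (lebPM d, q.2) - Dw d w q) ∂(Qc p) = 0 := by
    rw [integral_sub (by exact bi _ (hm2.comp measurable_snd) (fun p => hB _)) (bi _ hg.meas hB), h1, h2, sub_zero]
  have e : ∀ q : Xi d, Dw d w (lebPM d, q.2) - Dw d w q =
      (q.1 : Measure (UnitCube d)).real (cyl d w) - (normLeb d).real (cyl d w) := fun q => by
    simp only [Dw, coe_lebPM]; ring
  simp_rw [e] at hs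
  have hi : Integrable (fun q : Xi d => (q.1 : Measure (UnitCube d)).real (cyl d w)) (Qc p) :=
    Integrable.of_bound (measurable_real_cyl d w).aestronglyMeasurable 1
      (Eventually.of_forall fun x => by
        rw [Real.norm_of_nonneg measureReal_nonneg]; exact measureReal_le_one)
  rw [integral_sub hi (integrable_const _), integral_const] at hs
  simp only [probReal_univ, one_smul] at hs
  rw [lintegral_map (measurable_pm_apply d _ (measurableSet_cyl d w)) measurable_fst]
  have e2 : ∀ q : Xi d, (q.1 : Measure (UnitCube d)) (cyl d w) = ENNReal.ofReal ((q.1 : Measure (UnitCube d)).real (cyl d w)) :=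
    fun q => (ofReal_measureReal).symm
  simp_rw [e2]
  rw [← ofReal_integral_eq_lintegral_ofReal hi (Eventually.of_forall fun x => measureReal_nonneg),
    sub_eq_zero.1 hs, ofReal_measureReal]

/-- For a CP distribution `Q`, `Q`-almost every ergodic component (with respect to the
magnification map `M`) has normalized Lebesgue intensity. -/
theorem ae_ergodic_component_hasLebesgueIntensity (d : ℕ) (Q : Measure (Xi d))
    (hQ : IsCPD d Q)
    (Qc : Xi d → Measure (Xi d))
    (hprob : ∀ p, IsProbabilityMeasure (Qc p))
    (hmeas : ∀ A : Set (Xi d), MeasurableSet A → Measurable fun p => Qc p A)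
    (herg : ∀ᵐ p ∂Q, Ergodic (magnify d) (Qc p))
    (hdecomp : ∀ A : Set (Xi d), MeasurableSet A → Q A = ∫⁻ p, Qc p A ∂Q) :
    ∀ᵐ p ∂Q, HasLebesgueIntensity d (Qc p) := by
  have h := (ae_all_iff (ι := List (Fin d → Bool))).2
    (main_cyl d Q hQ Qc hprob hmeas herg hdecomp)
  filter_upwards [h] with p hp
  have := hprob p
  have hfst : IsProbabilityMeasure ((Qc p).map Prod.fst) :=
    Measure.isProbabilityMeasure_map measurable_fst.aemeasurable
  have happ : ∀ A, MeasurableSet A → (((Qc p).map Prod.fst).bind (pmKernel d)) A =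
      ∫⁻ ν, (ν : Measure (UnitCube d)) A ∂((Qc p).map Prod.fst) := fun A hA =>
    Measure.bind_apply hA (pmKernel d).measurable.aemeasurable
  have heq : normLeb d = ((Qc p).map Prod.fst).bind (pmKernel d) := by
    refine ext_of_generate_finite _ (generateFrom_cyl d) (isPiSystem_cyl d) ?_ ?_
    · rintro _ ⟨w, rfl⟩
      rw [happ _ (measurableSet_cyl d w), hp w]
    · rw [happ _ MeasurableSet.univ]
      simp
  intro A hA
  rw [← happ A hA, ← heq]
end

section
/- Let Q be an M-invariant, adapted distribution on \Xi = \mathcal{P}(B_1) \times B_1 with Lebesgue intensity, and let Q = \int Q_\alpha dQ(\alpha) be its ergodic decomposition with respect to the dyadic magnification map M. Then Q-almost every ergodic component Q_\alpha is adapted. -/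
open MeasureTheory Filter Topology

open scoped ENNReal

namespace CPAux

/-- first-level digit -/
noncomputable def dig (d : ℕ) (x : UnitCube d) : Fin d → Bool := fun i => decide ((x : Fin d → ℝ) i < 0)

/-- first `k` digits -/
noncomputable def itn (d : ℕ) (k : ℕ) (x : UnitCube d) : Fin k → (Fin d → Bool) :=
  fun n => dig d ((cubeExpand d)^[n] x)

lemma measurable_coe (d : ℕ) :
    Measurable (fun ν : ProbabilityMeasure (UnitCube d) => (ν : Measure (UnitCube d))) := by
  refine Measurable.measure_of_isPiSystem_of_isProbabilityMeasure
    (S := {s | IsClosed s}) ?_ isPiSystem_isClosed ?_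
  · rw [← borel_eq_generateFrom_isClosed]; exact BorelSpace.measurable_eq
  · intro F hF
    refine measurable_of_tendsto_metrizable (f := fun n (ν : ProbabilityMeasure (UnitCube d)) =>
      ∫⁻ x, ((IsClosed.apprSeq hF n) x : ℝ≥0∞) ∂(ν : Measure (UnitCube d))) ?_ ?_
    · intro n
      refine Continuous.measurable ?_
      rw [continuous_iff_continuousAt]
      intro ν
      exact (ProbabilityMeasure.tendsto_iff_forall_lintegral_tendsto.1 tendsto_id) _
    · rw [tendsto_pi_nhds]
      intro ν
      exact HasOuterApproxClosed.tendsto_lintegral_apprSeq hF _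

/-- the tautological kernel -/
noncomputable def kap (d : ℕ) : ProbabilityTheory.Kernel (ProbabilityMeasure (UnitCube d)) (UnitCube d) :=
  ⟨fun ν => (ν : Measure (UnitCube d)), measurable_coe d⟩

lemma kap_apply (d : ℕ) (ν) : kap d ν = (ν : Measure (UnitCube d)) := rfl

instance (d : ℕ) : ProbabilityTheory.IsMarkovKernel (kap d) :=
  ⟨fun ν => by rw [kap_apply]; infer_instance⟩

lemma integrable_of_bdd {α : Type*} [MeasurableSpace α] (μ : Measure α) [IsFiniteMeasure μ]
    {f : α → ℝ} (hf : Measurable f) {B : ℝ} (hB : ∀ x, |f x| ≤ B) : Integrable f μ :=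
  Integrable.of_bound hf.aestronglyMeasurable B (Eventually.of_forall hB)

lemma adapted_iff (d : ℕ) (Q : Measure (Xi d)) [IsProbabilityMeasure Q] :
    Adapted d Q ↔ Q = (Q.map Prod.fst).compProd (kap d) := by
  have : IsProbabilityMeasure (Q.map Prod.fst) :=
    Measure.isProbabilityMeasure_map measurable_fst.aemeasurable
  have key : ∀ f : C(Xi d, ℝ), ∫ p, f p ∂((Q.map Prod.fst).compProd (kap d)) =
      ∫ ν, (∫ x, f (ν, x) ∂(ν : Measure (UnitCube d))) ∂(Q.map Prod.fst) := by
    intro f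
    rw [Measure.integral_compProd]
    · rfl
    · exact (BoundedContinuousFunction.mkOfCompact f).integrable _
  constructor
  · intro h
    apply ext_of_forall_integral_eq_of_IsFiniteMeasure
    intro f
    exact (h f.toContinuousMap).trans (key f.toContinuousMap).symm
  · intro h f
    rw [← key f, ← h]

lemma measurable_cubeExpand (d : ℕ) : Measurable (cubeExpand d) := by
  unfold cubeExpand
  refine Measurable.subtype_mk ?_
  rw [measurable_pi_iff]
  intro i
  have : Measurable fun x : UnitCube d => (x : Fin d → ℝ) i :=
    (measurable_pi_apply i).comp measurable_subtype_coe
  exact Measurable.ite (measurableSet_lt this measurable_const)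
    ((this.const_mul 2).add_const 1) ((this.const_mul 2).sub_const 1)

lemma measurable_dig (d : ℕ) : Measurable (dig d) := by
  rw [measurable_pi_iff]
  intro i
  have : Measurable fun x : UnitCube d => (x : Fin d → ℝ) i :=
    (measurable_pi_apply i).comp measurable_subtype_coe
  refine measurable_to_bool ?_
  have h2 : (fun x : UnitCube d => dig d x i) ⁻¹' {true} = {x : UnitCube d | (x : Fin d → ℝ) i < 0} := by
    ext x; simp [dig]
  rw [h2]
  exact measurableSet_lt this measurable_const

lemma measurable_itn (d k : ℕ) : Measurable (itn d k) := by
  rw [measurable_pi_iff]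
  intro n
  exact (measurable_dig d).comp ((measurable_cubeExpand d).iterate n)

lemma cubeOf_eq (d : ℕ) (x : UnitCube d) : cubeOf d x = dig d ⁻¹' {dig d x} := by
  ext y
  simp [cubeOf, dig, funext_iff]

lemma itn_succ (d k : ℕ) (x : UnitCube d) :
    itn d (k+1) x = Fin.cons (dig d x) (itn d k (cubeExpand d x)) := by
  funext n
  refine Fin.cases ?_ (fun m => ?_) n
  · simp [itn]
  · simp [itn, Function.iterate_succ_apply]

lemma injective_digits (d : ℕ) (x y : UnitCube d)
    (h : ∀ n, dig d ((cubeExpand d)^[n] x) = dig d ((cubeExpand d)^[n] y)) : x = y := by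
  have step : ∀ x y : UnitCube d, dig d x = dig d y → ∀ i,
      ((cubeExpand d x : UnitCube d) : Fin d → ℝ) i - (cubeExpand d y : Fin d → ℝ) i
        = 2 * ((x : Fin d → ℝ) i - (y : Fin d → ℝ) i) := by
    intro x y hxy i
    have := congrFun hxy i
    simp only [dig, decide_eq_decide] at this
    simp only [cubeExpand, this]
    split_ifs <;> ring
  have it : ∀ n i, ((((cubeExpand d)^[n] x : UnitCube d) : Fin d → ℝ) i
      - ((cubeExpand d)^[n] y : UnitCube d).1 i) = 2 ^ n * (x.1 i - y.1 i) := by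
    intro n
    induction n with
    | zero => intro i; simp
    | succ n ih =>
      intro i
      rw [Function.iterate_succ_apply', Function.iterate_succ_apply', step _ _ (h n) i, ih i]
      ring
  apply Subtype.ext
  funext i
  by_contra hne
  have hpos : 0 < |x.1 i - y.1 i| := abs_pos.2 (sub_ne_zero.2 hne)
  obtain ⟨n, hn⟩ := pow_unbounded_of_one_lt (2 / |x.1 i - y.1 i|) (one_lt_two (α := ℝ))
  have h1 := congrArg abs (it n i)
  rw [abs_mul, abs_of_pos (by positivity : (0:ℝ) < 2 ^ n)] at h1
  rw [div_lt_iff₀ hpos, ← h1] at hn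
  have a := ((cubeExpand d)^[n] x).2
  have b := ((cubeExpand d)^[n] y).2
  have a1 := a.1 i
  have a2 := a.2 i
  have b1 := b.1 i
  have b2 := b.2 i
  simp only at a1 a2 b1 b2
  have : |((cubeExpand d)^[n] x).1 i - ((cubeExpand d)^[n] y).1 i| ≤ 2 := by
    rw [abs_le]; constructor <;> linarith
  linarith

/-- cylinder -/
noncomputable def cyl (d k : ℕ) (w : Fin k → (Fin d → Bool)) : Set (UnitCube d) := itn d k ⁻¹' {w}

lemma measurableSet_cyl (d k w) : MeasurableSet (cyl d k w) :=
  measurable_itn d k (MeasurableSet.singleton _)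

/-- all cylinders -/
noncomputable def cyls (d : ℕ) : Set (Set (UnitCube d)) := {s | ∃ k w, s = cyl d k w}

lemma cyls_pi (d : ℕ) : IsPiSystem (cyls d) := by
  have aux : ∀ k l w v, k ≤ l → (cyl d k w ∩ cyl d l v).Nonempty →
      cyl d k w ∩ cyl d l v = cyl d l v := by
    rintro k l w v hkl ⟨x, hx1, hx2⟩
    refine Set.inter_eq_right.2 fun y hy => ?_
    simp only [cyl, Set.mem_preimage, Set.mem_singleton_iff] at *
    rw [← hx1]
    rw [← hx2] at hy
    funext n
    exact congrFun hy (Fin.castLE hkl n)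
  rintro _ ⟨k, w, rfl⟩ _ ⟨l, v, rfl⟩ hne
  rcases le_total k l with h | h
  · exact ⟨l, v, aux _ _ _ _ h hne⟩
  · rw [Set.inter_comm] at hne ⊢
    exact ⟨k, w, aux _ _ _ _ h hne⟩

lemma cyls_gen (d : ℕ) :
    MeasurableSpace.generateFrom (cyls d) = (inferInstance : MeasurableSpace (UnitCube d)) := by
  apply le_antisymm
  · refine MeasurableSpace.generateFrom_le ?_
    rintro _ ⟨k, w, rfl⟩
    exact measurableSet_cyl d k w
  · let F : UnitCube d → (ℕ → (Fin d → Bool)) := fun x n => dig d ((cubeExpand d)^[n] x)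
    have hF : Measurable F := by
      rw [measurable_pi_iff]
      intro n
      exact (measurable_dig d).comp ((measurable_cubeExpand d).iterate n)
    have hinj : Function.Injective F := fun x y h => injective_digits d x y (fun n => congrFun h n)
    have he := hF.measurableEmbedding hinj
    rw [← he.comap_eq, ← measurable_iff_comap_le]
    refine @measurable_pi_iff _ _ _ (MeasurableSpace.generateFrom (cyls d)) _ _ |>.2 ?_
    intro n
    refine @measurable_to_countable' _ _ _ _ (MeasurableSpace.generateFrom (cyls d)) _ ?_
    intro a
    have : (fun x => F x n) ⁻¹' {a} = ⋃ w : {w : Fin (n+1) → (Fin d → Bool) // w (Fin.last n) = a},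
        cyl d (n+1) w.1 := by
      ext x
      simp only [Set.mem_preimage, Set.mem_singleton_iff, Set.mem_iUnion, cyl]
      constructor
      · intro h
        exact ⟨⟨itn d (n+1) x, by simpa [itn] using h⟩, rfl⟩
      · rintro ⟨⟨w, hw⟩, h⟩
        have h' : itn d (n+1) x = w := h
        rw [← hw, ← h']; simp [itn, F]
    rw [this]
    refine MeasurableSet.iUnion fun w => ?_
    exact MeasurableSpace.measurableSet_generateFrom ⟨_, _, rfl⟩

lemma magnify_on (d : ℕ) (ν : ProbabilityMeasure (UnitCube d)) (a : Fin d → Bool)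
    (hpos : (ν : Measure (UnitCube d)) (dig d ⁻¹' {a}) ≠ 0) :
    ∃ ν' : ProbabilityMeasure (UnitCube d),
      (ν' : Measure (UnitCube d)) = ((ν : Measure (UnitCube d)) (dig d ⁻¹' {a}))⁻¹ •
        ((ν : Measure (UnitCube d)).restrict (dig d ⁻¹' {a})).map (cubeExpand d) ∧
      ∀ x, dig d x = a → magnify d (ν, x) = (ν', cubeExpand d x) := by
  have hp : IsProbabilityMeasure (((ν : Measure (UnitCube d)) (dig d ⁻¹' {a}))⁻¹ •
        ((ν : Measure (UnitCube d)).restrict (dig d ⁻¹' {a})).map (cubeExpand d)) := by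
    constructor
    rw [Measure.smul_apply, Measure.map_apply (measurable_cubeExpand d) MeasurableSet.univ]
    simp only [Set.preimage_univ, Measure.restrict_apply_univ, smul_eq_mul]
    exact ENNReal.inv_mul_cancel hpos (measure_ne_top _ _)
  refine ⟨⟨_, hp⟩, rfl, ?_⟩
  rintro x rfl
  have hp' : IsProbabilityMeasure (((ν : Measure (UnitCube d)) (cubeOf d x))⁻¹ •
        ((ν : Measure (UnitCube d)).restrict (cubeOf d x)).map (cubeExpand d)) := by
    rw [cubeOf_eq]; exact hp
  unfold magnify
  rw [dif_pos hp']
  refine Prod.ext (Subtype.ext ?_) rfl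
  change ((ν : Measure (UnitCube d)) (cubeOf d x))⁻¹ •
        ((ν : Measure (UnitCube d)).restrict (cubeOf d x)).map (cubeExpand d) = _
  rw [cubeOf_eq]

lemma key (d : ℕ) (hM : Measurable (magnify d)) (h : Xi d → ℝ) (hh : Measurable h) (B : ℝ)
    (hB : ∀ p, |h p| ≤ B) (h0 : ∀ ν : ProbabilityMeasure (UnitCube d),
      ∫ x, h (ν, x) ∂(ν : Measure (UnitCube d)) = 0) :
    ∀ (j : ℕ) (ν : ProbabilityMeasure (UnitCube d)) (φ : (Fin j → (Fin d → Bool)) → ℝ),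
      ∫ x, φ (itn d j x) * h ((magnify d)^[j] (ν, x)) ∂(ν : Measure (UnitCube d)) = 0 := by
  intro j
  induction j with
  | zero =>
    intro ν φ
    have : ∀ x, itn d 0 x = Fin.elim0 := fun x => funext fun n => n.elim0
    simp only [this, Function.iterate_zero, id_eq]
    rw [integral_const_mul, h0, mul_zero]
  | succ j ih =>
    intro ν φ
    have hmeas : ∀ (j : ℕ) (φ : (Fin j → (Fin d → Bool)) → ℝ) (ν), Measurable fun x =>
        φ (itn d j x) * h ((magnify d)^[j] (ν, x)) := by
      intro j φ ν
      exact ((measurable_of_countable φ).comp (measurable_itn d j)).mul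
        (hh.comp ((hM.iterate j).comp measurable_prodMk_left))
    have hint : Integrable (fun x => φ (itn d (j+1) x) * h ((magnify d)^[j+1] (ν, x)))
        (ν : Measure (UnitCube d)) := by
      refine integrable_of_bdd _ (hmeas _ _ _) (B := (∑ w, |φ w|) * B) fun x => ?_
      rw [abs_mul]
      exact mul_le_mul (Finset.single_le_sum (f := fun w => |φ w|) (fun _ _ => abs_nonneg _)
        (Finset.mem_univ _)) (hB _) (abs_nonneg _) (Finset.sum_nonneg fun _ _ => abs_nonneg _)
    have hD : ∀ a, MeasurableSet (dig d ⁻¹' {a}) := fun a =>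
      measurable_dig d (MeasurableSet.singleton a)
    have hU : (⋃ a, dig d ⁻¹' {a}) = Set.univ := by
      ext x; simp
    rw [← setIntegral_univ, ← hU, integral_iUnion_fintype hD ?_ (fun _ => hint.integrableOn)]
    · refine Finset.sum_eq_zero fun a _ => ?_
      by_cases hz : (ν : Measure (UnitCube d)) (dig d ⁻¹' {a}) = 0
      · rw [Measure.restrict_eq_zero.2 hz, integral_zero_measure]
      obtain ⟨ν', hν', hmag⟩ := magnify_on d ν a hz
      have e := ih ν' (fun w => φ (Fin.cons a w))
      rw [hν', integral_smul_measure, integral_map (measurable_cubeExpand d).aemeasurable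
        (hmeas j (fun w => φ (Fin.cons a w)) ν').aestronglyMeasurable] at e
      have hne : (((ν : Measure (UnitCube d)) (dig d ⁻¹' {a}))⁻¹).toReal ≠ 0 := by
        rw [ENNReal.toReal_ne_zero]
        exact ⟨ENNReal.inv_ne_zero.2 (measure_ne_top _ _), ENNReal.inv_ne_top.2 hz⟩
      have e2 := (smul_eq_zero.1 e).resolve_left hne
      rw [← e2]
      refine setIntegral_congr_fun (hD a) fun x hx => ?_
      have hx' : dig d x = a := hx
      simp only [itn_succ, Function.iterate_succ_apply, hmag x hx', hx']
    · intro a b hab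
      exact Disjoint.preimage _ (Set.disjoint_singleton.2 hab)

/-- The test function. -/
noncomputable def gfun (d k : ℕ) (A : Set (ProbabilityMeasure (UnitCube d)))
    (w : Fin k → (Fin d → Bool)) (p : Xi d) : ℝ :=
  A.indicator (fun _ => (1:ℝ)) p.1 *
    ((if itn d k p.2 = w then 1 else 0) - (p.1 : Measure (UnitCube d)).real (cyl d k w))

lemma measurable_real (d : ℕ) (C : Set (UnitCube d)) (hC : MeasurableSet C) :
    Measurable fun ν : ProbabilityMeasure (UnitCube d) => (ν : Measure (UnitCube d)).real C :=
  ((Measure.measurable_coe hC).comp (measurable_coe d)).ennreal_toReal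

lemma measurable_gfun (d k : ℕ) {A : Set (ProbabilityMeasure (UnitCube d))} (hA : MeasurableSet A)
    (w : Fin k → (Fin d → Bool)) : Measurable (gfun d k A w) := by
  unfold gfun
  refine ((measurable_const.indicator hA).comp measurable_fst).mul (Measurable.sub ?_ ?_)
  · exact (measurable_of_countable (fun v : Fin k → (Fin d → Bool) => if v = w then (1:ℝ) else 0)).comp
      ((measurable_itn d k).comp measurable_snd)
  · exact (measurable_real d _ (measurableSet_cyl d k w)).comp measurable_fst

lemma gfun_bdd (d k : ℕ) (A : Set (ProbabilityMeasure (UnitCube d)))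
    (w : Fin k → (Fin d → Bool)) (p : Xi d) : |gfun d k A w p| ≤ 1 := by
  unfold gfun
  have h1 : (p.1 : Measure (UnitCube d)).real (cyl d k w) ≤ 1 := measureReal_le_one
  have h2 : 0 ≤ (p.1 : Measure (UnitCube d)).real (cyl d k w) := measureReal_nonneg
  by_cases hA : p.1 ∈ A
  · rw [Set.indicator_of_mem hA, one_mul, abs_le]
    split_ifs <;> constructor <;> linarith
  · rw [Set.indicator_of_notMem hA]; simp

lemma integral_ite (d k : ℕ) (w : Fin k → (Fin d → Bool)) (μ : Measure (UnitCube d)) :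
    ∫ x, (if itn d k x = w then (1:ℝ) else 0) ∂μ = μ.real (cyl d k w) := by
  have : (fun x => if itn d k x = w then (1:ℝ) else 0) = (cyl d k w).indicator 1 := by
    funext x
    simp only [Set.indicator, cyl, Set.mem_preimage, Set.mem_singleton_iff, Pi.one_apply]
  rw [this, integral_indicator_one (measurableSet_cyl d k w)]

lemma gfun_mean (d k : ℕ) (A : Set (ProbabilityMeasure (UnitCube d)))
    (w : Fin k → (Fin d → Bool)) (ν : ProbabilityMeasure (UnitCube d)) :
    ∫ x, gfun d k A w (ν, x) ∂(ν : Measure (UnitCube d)) = 0 := by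
  unfold gfun
  simp only
  rw [integral_const_mul, integral_sub, integral_ite]
  · simp
  · refine integrable_of_bdd _ (B := 1) ?_ ?_
    · exact (measurable_of_countable (fun v : Fin k → (Fin d → Bool) => if v = w then (1:ℝ) else 0)).comp
        (measurable_itn d k)
    · intro x; split_ifs <;> simp
  · exact integrable_const _

/-- Partial sums along `M^k`. -/
noncomputable def Ssum (d k : ℕ) (g : Xi d → ℝ) : ℕ → Xi d → ℝ
  | 0 => fun _ => 0
  | n+1 => fun p => g p + Ssum d k g n ((magnify d)^[k] p)

lemma Ssum_props (d k : ℕ) (Q : Measure (Xi d)) [IsProbabilityMeasure Q]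
    (hQM : MeasurePreserving (magnify d) Q Q) (hQ : Q = (Q.map Prod.fst).compProd (kap d))
    {A : Set (ProbabilityMeasure (UnitCube d))} (hA : MeasurableSet A)
    (w : Fin k → (Fin d → Bool)) (n : ℕ) :
    Measurable (Ssum d k (gfun d k A w) n) ∧ (∀ p, |Ssum d k (gfun d k A w) n p| ≤ n) ∧
    (∀ ν : ProbabilityMeasure (UnitCube d),
      ∫ x, Ssum d k (gfun d k A w) n (ν, x) ∂(ν : Measure (UnitCube d)) = 0) ∧
    ∫ p, (Ssum d k (gfun d k A w) n p) ^ 2 ∂Q ≤ n := by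
  set g := gfun d k A w with hg
  have gm : Measurable g := measurable_gfun d k hA w
  have gb : ∀ p, |g p| ≤ 1 := gfun_bdd d k A w
  have hM := hQM.measurable
  have : IsProbabilityMeasure (Q.map Prod.fst) :=
    Measure.isProbabilityMeasure_map measurable_fst.aemeasurable
  induction n with
  | zero =>
    refine ⟨measurable_const, fun p => by simp [Ssum], fun ν => by simp [Ssum], by simp [Ssum]⟩
  | succ n ih =>
    obtain ⟨hm, hb, hz, hs⟩ := ih
    set S := Ssum d k g n with hS
    have hkey := key d hM S hm n hb hz k
    have hSm : Measurable fun p => S ((magnify d)^[k] p) := hm.comp (hM.iterate k)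
    have hSb : ∀ p, |S ((magnify d)^[k] p)| ≤ n := fun p => hb _
    have heq : Ssum d k g (n+1) = fun p => g p + S ((magnify d)^[k] p) := rfl
    rw [heq]
    refine ⟨gm.add hSm, fun p => ?_, fun ν => ?_, ?_⟩
    · push_cast
      have := abs_add_le (g p) (S ((magnify d)^[k] p))
      have := gb p
      have := hSb p
      linarith
    · rw [integral_add, gfun_mean]
      · have := hkey ν (fun _ => 1)
        simpa using this
      · exact integrable_of_bdd _ (gm.comp measurable_prodMk_left) (fun x => gb _)
      · exact integrable_of_bdd _ (hSm.comp measurable_prodMk_left) (fun x => hSb _)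
    · have hcross : ∫ p, g p * S ((magnify d)^[k] p) ∂Q = 0 := by
        rw [hQ, Measure.integral_compProd]
        · refine integral_eq_zero_of_ae (Eventually.of_forall fun ν => ?_)
          exact hkey ν (fun v => A.indicator (fun _ => (1:ℝ)) ν *
            ((if v = w then 1 else 0) - (ν : Measure (UnitCube d)).real (cyl d k w)))
        · refine integrable_of_bdd _ (gm.mul hSm) (B := 1 * n) fun p => ?_
          rw [abs_mul]
          exact mul_le_mul (gb p) (hSb p) (abs_nonneg _) zero_le_one
      have e : ∀ p, (g p + S ((magnify d)^[k] p)) ^ 2 =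
        g p ^ 2 + 2 * (g p * S ((magnify d)^[k] p)) + (S ((magnify d)^[k] p)) ^ 2 := fun p => by ring
      have i1 : Integrable (fun p => g p ^ 2) Q := integrable_of_bdd _ (gm.pow_const 2) (B := 1 ^ 2)
        fun p => by rw [abs_pow]; exact pow_le_pow_left₀ (abs_nonneg _) (gb p) 2
      have i2 : Integrable (fun p => 2 * (g p * S ((magnify d)^[k] p))) Q := by
        refine Integrable.const_mul ?_ 2
        refine integrable_of_bdd _ (gm.mul hSm) (B := 1 * n) fun p => ?_
        rw [abs_mul]
        exact mul_le_mul (gb p) (hSb p) (abs_nonneg _) zero_le_one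
      have i3 : Integrable (fun p => (S ((magnify d)^[k] p)) ^ 2) Q :=
        integrable_of_bdd _ (hSm.pow_const 2) (B := (n:ℝ) ^ 2)
          fun p => by rw [abs_pow]; exact pow_le_pow_left₀ (abs_nonneg _) (hSb p) 2
      simp only [e]
      rw [integral_add (f := fun p => g p ^ 2 + 2 * (g p * S ((magnify d)^[k] p)))
        (i1.add i2) i3, integral_add i1 i2, integral_const_mul, hcross]
      have h3 : ∫ p, (S ((magnify d)^[k] p)) ^ 2 ∂Q = ∫ p, S p ^ 2 ∂Q := by
        have hmp := hQM.iterate k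
        conv_rhs => rw [← hmp.map_eq]
        rw [integral_map hmp.measurable.aemeasurable (hm.pow_const 2).aestronglyMeasurable]
      have h1 : ∫ p, g p ^ 2 ∂Q ≤ 1 := by
        calc ∫ p, g p ^ 2 ∂Q ≤ ∫ p, 1 ∂Q := integral_mono i1 (integrable_const _) fun p => by
              have := abs_le.1 (gb p)
              simp only
              nlinarith
          _ = 1 := by simp
      rw [h3]
      push_cast
      linarith

lemma Ssum_integral (d k : ℕ) (ρ : Measure (Xi d)) [IsProbabilityMeasure ρ]
    (hR : MeasurePreserving (magnify d) ρ ρ) {g : Xi d → ℝ} (gm : Measurable g)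
    (gb : ∀ p, |g p| ≤ 1) (n : ℕ) (hm : ∀ n, Measurable (Ssum d k g n))
    (hb : ∀ (n : ℕ) p, |Ssum d k g n p| ≤ n) :
    ∫ p, Ssum d k g n p ∂ρ = n * ∫ p, g p ∂ρ := by
  induction n with
  | zero => simp [Ssum]
  | succ n ih =>
    have hmp := hR.iterate k
    have h3 : ∫ p, Ssum d k g n ((magnify d)^[k] p) ∂ρ = ∫ p, Ssum d k g n p ∂ρ := by
      conv_rhs => rw [← hmp.map_eq]
      rw [integral_map hmp.measurable.aemeasurable (hm n).aestronglyMeasurable]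
    have : ∫ p, Ssum d k g (n+1) p ∂ρ = ∫ p, (g p + Ssum d k g n ((magnify d)^[k] p)) ∂ρ := rfl
    rw [this, integral_add (g := fun p => Ssum d k g n ((magnify d)^[k] p)) (integrable_of_bdd _ gm gb)
      (integrable_of_bdd _ ((hm n).comp hmp.measurable) (fun p => hb n _)), h3, ih]
    push_cast; ring

lemma integral_gfun_zero (d k : ℕ) (Q : Measure (Xi d)) [IsProbabilityMeasure Q]
    (hQM : MeasurePreserving (magnify d) Q Q) (hQ : Q = (Q.map Prod.fst).compProd (kap d))
    (Qc : Xi d → Measure (Xi d)) (hprob : ∀ p, IsProbabilityMeasure (Qc p))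
    (hQc : Measurable Qc) (hinv : ∀ᵐ p ∂Q, MeasurePreserving (magnify d) (Qc p) (Qc p))
    (hbind : Q = Q.bind Qc)
    {A : Set (ProbabilityMeasure (UnitCube d))} (hA : MeasurableSet A)
    (w : Fin k → (Fin d → Bool)) :
    ∀ᵐ p ∂Q, ∫ q, gfun d k A w q ∂(Qc p) = 0 := by
  have hprops := Ssum_props d k Q hQM hQ hA w
  have gm : Measurable (gfun d k A w) := measurable_gfun d k hA w
  have gb := gfun_bdd d k A w
  set g := gfun d k A w with hg
  have hcm : Measurable fun p => ∫ q, g q ∂(Qc p) := by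
    let κ : ProbabilityTheory.Kernel (Xi d) (Xi d) := ⟨Qc, hQc⟩
    have : ProbabilityTheory.IsMarkovKernel κ := ⟨hprob⟩
    exact (MeasureTheory.StronglyMeasurable.integral_kernel (κ := κ)
      gm.stronglyMeasurable).measurable
  have hbound : ∀ n : ℕ, (n : ℝ≥0∞) ^ 2 * ∫⁻ p, ENNReal.ofReal ((∫ q, g q ∂(Qc p)) ^ 2) ∂Q ≤ n := by
    intro n
    obtain ⟨hm, hb, -, hs⟩ := hprops n
    have hi2 : ∀ (ρ : Measure (Xi d)) [IsProbabilityMeasure ρ],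
        Integrable (fun q => (Ssum d k g n q) ^ 2) ρ := fun ρ _ =>
      integrable_of_bdd _ (hm.pow_const 2) (B := (n:ℝ) ^ 2)
        fun p => by rw [abs_pow]; exact pow_le_pow_left₀ (abs_nonneg _) (hb p) 2
    have h1 : ∫⁻ p, ENNReal.ofReal ((Ssum d k g n p) ^ 2) ∂Q ≤ n := by
      rw [← ofReal_integral_eq_lintegral_ofReal (hi2 Q) (Eventually.of_forall fun _ => sq_nonneg _)]
      exact (ENNReal.ofReal_le_ofReal hs).trans (by simp)
    refine le_trans ?_ h1
    have hmm : Measurable fun p => ENNReal.ofReal ((Ssum d k g n p) ^ 2) :=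
      (hm.pow_const 2).ennreal_ofReal
    conv_rhs => rw [hbind]
    rw [Measure.lintegral_bind hQc.aemeasurable hmm.aemeasurable,
      ← lintegral_const_mul _ (hcm.pow_const 2).ennreal_ofReal]
    refine lintegral_mono_ae ?_
    filter_upwards [hinv] with p hp
    have := hprob p
    rw [← ofReal_integral_eq_lintegral_ofReal (hi2 (Qc p))
      (Eventually.of_forall fun _ => sq_nonneg _)]
    have hI := Ssum_integral d k (Qc p) hp gm gb n (fun n => (hprops n).1) (fun n => (hprops n).2.1)
    have hcs : (∫ q, Ssum d k g n q ∂(Qc p)) ^ 2 ≤ ∫ q, (Ssum d k g n q) ^ 2 ∂(Qc p) := by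
      have hL : MemLp (Ssum d k g n) 2 (Qc p) := (memLp_two_iff_integrable_sq
        hm.aestronglyMeasurable).2 (hi2 _)
      have hv := ProbabilityTheory.variance_nonneg (Ssum d k g n) (Qc p)
      rw [ProbabilityTheory.variance_eq_sub hL] at hv
      simpa using hv
    rw [hI, mul_pow] at hcs
    refine le_trans (le_of_eq ?_) (ENNReal.ofReal_le_ofReal hcs)
    rw [ENNReal.ofReal_mul (by positivity), ENNReal.ofReal_pow (Nat.cast_nonneg n), ENNReal.ofReal_natCast]
  have hzero : ∫⁻ p, ENNReal.ofReal ((∫ q, g q ∂(Qc p)) ^ 2) ∂Q = 0 := by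
    set I := ∫⁻ p, ENNReal.ofReal ((∫ q, g q ∂(Qc p)) ^ 2) ∂Q with hI
    by_contra hne
    have hle : ∀ n : ℕ, (n : ℝ≥0∞) * I ≤ 1 := by
      intro n
      rcases Nat.eq_zero_or_pos n with rfl | hn
      · simp
      have h := hbound n
      have hn0 : (n : ℝ≥0∞) ≠ 0 := by exact_mod_cast hn.ne'
      have hn1 : (n : ℝ≥0∞) ≠ ∞ := ENNReal.natCast_ne_top n
      rw [sq, mul_assoc] at h
      have h2 : (n : ℝ≥0∞) * (n * I) ≤ n * 1 := by simpa using h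
      exact (ENNReal.mul_le_mul_iff_right hn0 hn1).1 h2
    obtain ⟨n, hn⟩ := ENNReal.exists_nat_mul_gt hne ENNReal.one_ne_top
    exact absurd (hle n) (not_le.2 hn)
  rw [lintegral_eq_zero_iff (hcm.pow_const 2).ennreal_ofReal] at hzero
  filter_upwards [hzero] with p hp
  have : (∫ q, g q ∂(Qc p)) ^ 2 ≤ 0 := ENNReal.ofReal_eq_zero.1 hp
  exact pow_eq_zero_iff (two_ne_zero) |>.1 (le_antisymm this (sq_nonneg _))

lemma measure_prod_of_gfun (d k : ℕ) (ρ : Measure (Xi d)) [IsProbabilityMeasure ρ]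
    {A : Set (ProbabilityMeasure (UnitCube d))} (hA : MeasurableSet A)
    (w : Fin k → (Fin d → Bool)) (h : ∫ q, gfun d k A w q ∂ρ = 0) :
    ρ (A ×ˢ cyl d k w) = ((ρ.map Prod.fst).compProd (kap d)) (A ×ˢ cyl d k w) := by
  have : IsProbabilityMeasure (ρ.map Prod.fst) :=
    Measure.isProbabilityMeasure_map measurable_fst.aemeasurable
  have hC := measurableSet_cyl d k w
  have e : ∀ q : Xi d, gfun d k A w q = (A ×ˢ cyl d k w).indicator 1 q -
      (A.indicator (fun ν => (ν : Measure (UnitCube d)).real (cyl d k w))) q.1 := by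
    intro q
    by_cases h1 : q.1 ∈ A <;> by_cases h2 : itn d k q.2 = w <;>
      simp [gfun, Set.indicator, h1, h2, cyl]
  have m2 : Measurable (A.indicator (fun ν : ProbabilityMeasure (UnitCube d) =>
      (ν : Measure (UnitCube d)).real (cyl d k w))) :=
    (measurable_real d _ hC).indicator hA
  simp only [e] at h
  rw [integral_sub, integral_indicator_one (hA.prod hC), sub_eq_zero] at h
  · rw [← ENNReal.toReal_eq_toReal_iff' (measure_ne_top _ _) (measure_ne_top _ _)]
    change ρ.real _ = _
    rw [h, Measure.compProd_apply_prod hA hC, ← integral_map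
      (f := A.indicator (fun ν : ProbabilityMeasure (UnitCube d) =>
      (ν : Measure (UnitCube d)).real (cyl d k w))) measurable_fst.aemeasurable
      m2.aestronglyMeasurable, integral_indicator hA]
    rw [← integral_toReal]
    · rfl
    · exact ((kap d).measurable_coe hC).aemeasurable
    · exact Eventually.of_forall fun ν => measure_lt_top _ _
  · refine integrable_of_bdd _ (measurable_one.indicator (hA.prod hC)) (B := 1) fun q => ?_
    by_cases hq : q ∈ A ×ˢ cyl d k w <;> simp [Set.indicator, hq]
  · refine integrable_of_bdd _ (m2.comp measurable_fst) (B := 1) fun q => ?_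
    by_cases hq : q.1 ∈ A
    · rw [Set.indicator_of_mem hq, abs_of_nonneg measureReal_nonneg]; exact measureReal_le_one
    · rw [Set.indicator_of_notMem hq]; simp

end CPAux

/-- For a CP distribution `Q` with ergodic decomposition `Q = ∫ Q_α dQ(α)` with respect
to the magnification map `M`, `Q`-almost every ergodic component is adapted. -/
theorem ae_ergodic_component_adapted (d : ℕ) (Q : Measure (Xi d))
    (hQ : IsCPD d Q)
    (Qc : Xi d → Measure (Xi d))
    (hprob : ∀ p, IsProbabilityMeasure (Qc p))
    (hmeas : ∀ A : Set (Xi d), MeasurableSet A → Measurable fun p => Qc p A)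
    (herg : ∀ᵐ p ∂Q, Ergodic (magnify d) (Qc p))
    (hdecomp : ∀ A : Set (Xi d), MeasurableSet A → Q A = ∫⁻ p, Qc p A ∂Q) :
    ∀ᵐ p ∂Q, Adapted d (Qc p) := by
  obtain ⟨hQp, hQM, hQa, -⟩ := hQ
  have hQ' := (CPAux.adapted_iff d Q).1 hQa
  have hQc : Measurable Qc := Measure.measurable_of_measurable_coe _ hmeas
  have hbind : Q = Q.bind Qc := by
    ext A hA
    rw [Measure.bind_apply hA hQc.aemeasurable]
    exact hdecomp A hA
  have hinv : ∀ᵐ p ∂Q, MeasurePreserving (magnify d) (Qc p) (Qc p) := by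
    filter_upwards [herg] with p hp using hp.toMeasurePreserving
  -- a countable pi-system generating the Borel sets of the space of measures
  obtain ⟨b, hbc, hbg⟩ := MeasurableSpace.CountablyGenerated.isCountablyGenerated
    (α := ProbabilityMeasure (UnitCube d))
  have hbm : ∀ s ∈ b, MeasurableSet s := fun s hs => by
    rw [hbg]; exact MeasurableSpace.measurableSet_generateFrom hs
  have : Countable b := hbc.to_subtype
  let AF : Finset b → Set (ProbabilityMeasure (UnitCube d)) := fun F => ⋂ s ∈ F, (s : Set _)
  have hAF : ∀ F, MeasurableSet (AF F) := fun F =>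
    Finset.measurableSet_biInter F fun s _ => hbm s.1 s.2
  have hpi : IsPiSystem (Set.range AF) := by
    classical
    rintro _ ⟨F, rfl⟩ _ ⟨G, rfl⟩ -
    refine ⟨F ∪ G, ?_⟩
    ext ν
    simp only [AF, Set.mem_iInter, Set.mem_inter_iff, Finset.mem_union]
    grind
  have hgenAF : MeasurableSpace.generateFrom (Set.range AF) =
      (inferInstance : MeasurableSpace (ProbabilityMeasure (UnitCube d))) := by
    apply le_antisymm
    · refine MeasurableSpace.generateFrom_le ?_
      rintro _ ⟨F, rfl⟩
      exact hAF F
    · refine hbg.le.trans (MeasurableSpace.generateFrom_mono ?_)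
      intro s hs
      refine ⟨{⟨s, hs⟩}, ?_⟩
      ext ν
      simp only [AF, Set.mem_iInter, Finset.mem_singleton]
      exact ⟨fun h => h ⟨s, hs⟩ rfl, fun h t ht => by rw [ht]; exact h⟩
  have hall : ∀ᵐ p ∂Q, ∀ (F : Finset b) (k : ℕ) (w : Fin k → (Fin d → Bool)),
      ∫ q, CPAux.gfun d k (AF F) w q ∂(Qc p) = 0 := by
    simp only [ae_all_iff]
    intro F k w
    exact CPAux.integral_gfun_zero d k Q hQM hQ' Qc hprob hQc hinv hbind (hAF F) w
  filter_upwards [hall] with p hp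
  have := hprob p
  have : IsProbabilityMeasure ((Qc p).map Prod.fst) :=
    Measure.isProbabilityMeasure_map measurable_fst.aemeasurable
  rw [CPAux.adapted_iff]
  refine ext_of_generate_finite
    (Set.image2 (fun s t => s ×ˢ t) (Set.range AF) (CPAux.cyls d)) ?_
    (hpi.prod (CPAux.cyls_pi d)) ?_ (by simp)
  · refine (generateFrom_eq_prod hgenAF (CPAux.cyls_gen d) ?_ ?_).symm
    · exact ⟨fun _ => Set.univ, fun _ => ⟨∅, by simp [AF]⟩, Set.iUnion_const _⟩
    · refine ⟨fun _ => Set.univ, fun _ => ⟨0, Fin.elim0, ?_⟩, Set.iUnion_const _⟩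
      ext x
      simp only [Set.mem_univ, true_iff, CPAux.cyl, Set.mem_preimage, Set.mem_singleton_iff]
      exact funext fun n => n.elim0
  · rintro _ ⟨_, ⟨F, rfl⟩, _, ⟨k, w, rfl⟩, rfl⟩
    exact CPAux.measure_prod_of_gfun d k (Qc p) (hAF F) w (hp F k w)
end

section
/- The set of CP distributions is closed in \mathcal{P}(\Xi) with the weak topology. In particular, if Q_n are CP distributions and Q_n \to Q weakly, then Q is M-invariant, adapted, and has Lebesgue intensity. -/
open MeasureTheory Filter Topology

namespace CPClosed

open ProbabilityTheory

variable {d : ℕ}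

/-- If `A` is `μ`-almost its interior then `A` satisfies the portmanteau inequality for open sets. -/
lemma le_liminf_of_interior {X ι : Type*} {L : Filter ι} [MeasurableSpace X] [TopologicalSpace X]
    [OpensMeasurableSpace X] [HasOuterApproxClosed X] {μ : ProbabilityMeasure X}
    {μs : ι → ProbabilityMeasure X} (h : Tendsto μs L (𝓝 μ)) {A : Set X}
    (hA : ∀ᵐ x ∂(μ : Measure X), x ∈ A → x ∈ interior A) :
    (μ : Measure X) A ≤ L.liminf fun i => (μs i : Measure X) A :=
  calc (μ : Measure X) A ≤ (μ : Measure X) (interior A) := measure_mono_ae hA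
    _ ≤ L.liminf fun i => (μs i : Measure X) (interior A) :=
        ProbabilityMeasure.le_liminf_measure_open_of_tendsto h isOpen_interior
    _ ≤ _ := liminf_le_liminf (Eventually.of_forall fun i => measure_mono interior_subset)

/-- The evaluation measure depends measurably on the probability measure (Borel sigma-algebra). -/
lemma measurable_coe_pm :
    Measurable (fun ν : ProbabilityMeasure (UnitCube d) => (ν : Measure (UnitCube d))) := by
  refine Measurable.measure_of_isPiSystem_of_isProbabilityMeasure
    (S := {s | IsClosed s}) ?_ isPiSystem_isClosed ?_
  · rw [← borel_eq_generateFrom_isClosed]; exact BorelSpace.measurable_eq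
  · intro F hF
    refine measurable_of_tendsto_metrizable (f := fun n (ν : ProbabilityMeasure (UnitCube d)) =>
      ∫⁻ x, hF.apprSeq n x ∂(ν : Measure (UnitCube d))) (fun n => ?_) ?_
    · exact (ProbabilityMeasure.continuous_lintegral_boundedContinuousFunction _).measurable
    · rw [tendsto_pi_nhds]
      intro ν
      exact HasOuterApproxClosed.tendsto_lintegral_apprSeq hF _

/-- The tautological kernel. -/
noncomputable def ker (d : ℕ) : Kernel (ProbabilityMeasure (UnitCube d)) (UnitCube d) :=
  ⟨fun ν => (ν : Measure (UnitCube d)), measurable_coe_pm⟩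

instance : IsMarkovKernel (ker d) := ⟨fun ν => ν.2⟩

lemma ker_apply (ν : ProbabilityMeasure (UnitCube d)) : ker d ν = (ν : Measure (UnitCube d)) := rfl

lemma eq_compProd {Q : Measure (Xi d)} [IsProbabilityMeasure Q] (h : Adapted d Q) :
    Q = (Q.map Prod.fst).compProd (ker d) := by
  have : IsProbabilityMeasure (Q.map Prod.fst) :=
    Measure.isProbabilityMeasure_map measurable_fst.aemeasurable
  refine ext_of_forall_integral_eq_of_IsFiniteMeasure fun f => ?_
  rw [Measure.integral_compProd (f.integrable _)]
  exact h f.toContinuousMap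

lemma apply_prod {Q : Measure (Xi d)} [IsProbabilityMeasure Q] (h : Adapted d Q)
    {s : Set (ProbabilityMeasure (UnitCube d))} {A : Set (UnitCube d)} (hs : MeasurableSet s)
    (hA : MeasurableSet A) :
    Q (s ×ˢ A) = ∫⁻ ν in s, (ν : Measure (UnitCube d)) A ∂(Q.map Prod.fst) := by
  have : IsProbabilityMeasure (Q.map Prod.fst) :=
    Measure.isProbabilityMeasure_map measurable_fst.aemeasurable
  conv_lhs => rw [eq_compProd h, Measure.compProd_apply_prod hs hA]
  rfl

lemma intensity_iff {Q : Measure (Xi d)} [IsProbabilityMeasure Q] (h : Adapted d Q) :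
    HasLebesgueIntensity d Q ↔ Q.map Prod.snd = normLeb d := by
  have key : ∀ A, MeasurableSet A →
      Q.map Prod.snd A = ∫⁻ ν, (ν : Measure (UnitCube d)) A ∂(Q.map Prod.fst) := by
    intro A hA
    rw [Measure.map_apply measurable_snd hA, ← Set.univ_prod, apply_prod h .univ hA,
      setLIntegral_univ]
  constructor
  · intro H
    ext A hA
    rw [key A hA, H A hA]
  · intro H A hA
    rw [← key A hA, H]

/-- The pairing `ν ↦ ∫ f(ν,x) dν(x)` is continuous. -/
lemma continuous_pairing (f : C(Xi d, ℝ)) :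
    Continuous fun ν : ProbabilityMeasure (UnitCube d) =>
      ∫ x, f (ν, x) ∂(ν : Measure (UnitCube d)) := by
  rw [continuous_iff_continuousAt]
  intro ν₀
  have h1 : Tendsto (fun ν => ‖f.curry ν - f.curry ν₀‖) (𝓝 ν₀) (𝓝 0) := by
    have := ((map_continuous f.curry).sub (continuous_const (y := f.curry ν₀))).norm.tendsto ν₀
    simpa using this
  have h2 : Tendsto (fun ν : ProbabilityMeasure (UnitCube d) =>
      ∫ x, f.curry ν₀ x ∂(ν : Measure (UnitCube d))) (𝓝 ν₀)
      (𝓝 (∫ x, f.curry ν₀ x ∂(ν₀ : Measure (UnitCube d)))) :=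
    (ProbabilityMeasure.continuous_integral_continuousMap (f.curry ν₀)).tendsto ν₀
  have h3 : Tendsto (fun ν : ProbabilityMeasure (UnitCube d) =>
      ∫ x, (f.curry ν - f.curry ν₀) x ∂(ν : Measure (UnitCube d))) (𝓝 ν₀) (𝓝 0) := by
    refine squeeze_zero_norm (fun ν => ?_) h1
    have := norm_integral_le_of_norm_le_const (μ := (ν : Measure (UnitCube d)))
      (Eventually.of_forall fun x => (f.curry ν - f.curry ν₀).norm_coe_le_norm x)
    simpa using this
  have h4 := h3.add h2
  rw [zero_add] at h4
  refine h4.congr fun ν => ?_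
  have int : ∀ g : C(UnitCube d, ℝ), Integrable g (ν : Measure (UnitCube d)) := fun g =>
    (BoundedContinuousFunction.mkOfCompact g).integrable _
  rw [← integral_add (int _) (int _)]
  simp

lemma adapted_limit {Qn : ℕ → ProbabilityMeasure (Xi d)} {Q : ProbabilityMeasure (Xi d)}
    (h : ∀ n, Adapted d (Qn n : Measure (Xi d))) (hQ : Tendsto Qn atTop (𝓝 Q)) :
    Adapted d (Q : Measure (Xi d)) := by
  intro f
  have hg := continuous_pairing f
  let g : C(Xi d, ℝ) := ⟨_, hg.comp continuous_fst⟩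
  have hmap : ∀ P : ProbabilityMeasure (Xi d),
      ∫ ν, (∫ x, f (ν, x) ∂(ν : Measure (UnitCube d))) ∂((P : Measure (Xi d)).map Prod.fst)
        = ∫ p, g p ∂(P : Measure (Xi d)) := fun P =>
    integral_map measurable_fst.aemeasurable hg.aestronglyMeasurable
  have h1 := ((ProbabilityMeasure.continuous_integral_continuousMap f).tendsto Q).comp hQ
  have h2 := ((ProbabilityMeasure.continuous_integral_continuousMap g).tendsto Q).comp hQ
  rw [hmap]
  refine tendsto_nhds_unique h1 (h2.congr fun n => ?_)
  simp only [Function.comp]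
  rw [← hmap, h n f]

lemma intensity_limit {Qn : ℕ → ProbabilityMeasure (Xi d)} {Q : ProbabilityMeasure (Xi d)}
    (h : ∀ n, (Qn n : Measure (Xi d)).map Prod.snd = normLeb d) (hQ : Tendsto Qn atTop (𝓝 Q)) :
    (Q : Measure (Xi d)).map Prod.snd = normLeb d := by
  have h1 := ProbabilityMeasure.tendsto_map_of_tendsto_of_continuous Qn Q hQ
    (f := Prod.snd) continuous_snd
  have hc : ∀ n, (Qn n).map (f := Prod.snd) continuous_snd.measurable.aemeasurable
      = (Qn 0).map (f := Prod.snd) continuous_snd.measurable.aemeasurable := by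
    intro n
    apply Subtype.ext
    exact (h n).trans (h 0).symm
  simp only [hc] at h1
  have h2 := tendsto_nhds_unique h1 tendsto_const_nhds
  exact (congrArg Subtype.val h2).trans (h 0)

/-- The dyadic boundary. -/
def bdry (d : ℕ) : Set (UnitCube d) := {x | ∃ i, (x : Fin d → ℝ) i = 0}

/-- The first-level dyadic cube with sign pattern `s`. -/
def cell (s : Set (Fin d)) : Set (UnitCube d) := {y | ∀ i, ((y : Fin d → ℝ) i < 0 ↔ i ∈ s)}

lemma continuous_coord (i : Fin d) : Continuous fun x : UnitCube d => (x : Fin d → ℝ) i :=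
  (continuous_apply i).comp continuous_subtype_val

lemma measurableSet_bdry : MeasurableSet (bdry d) := by
  have : bdry d = ⋃ i, {x : UnitCube d | (x : Fin d → ℝ) i = 0} := by ext; simp [bdry]
  rw [this]
  exact MeasurableSet.iUnion fun i =>
    (isClosed_eq (continuous_coord i) continuous_const).measurableSet

lemma measurableSet_cell (s : Set (Fin d)) : MeasurableSet (cell s) := by
  have : cell s = ⋂ i, {x : UnitCube d | ((x : Fin d → ℝ) i < 0 ↔ i ∈ s)} := by ext; simp [cell]
  rw [this]
  refine MeasurableSet.iInter fun i => ?_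
  have hm : MeasurableSet {x : UnitCube d | (x : Fin d → ℝ) i < 0} :=
    (isOpen_lt (continuous_coord i) continuous_const).measurableSet
  by_cases hi : i ∈ s
  · simpa [hi] using hm
  · simpa [hi, Set.compl_ofPred] using hm.compl

lemma cubeOf_eq (x : UnitCube d) : cubeOf d x = cell {i | (x : Fin d → ℝ) i < 0} := rfl

lemma measurableSet_cubeOf (x : UnitCube d) : MeasurableSet (cubeOf d x) := measurableSet_cell _

lemma normLeb_bdry : normLeb d (bdry d) = 0 := by
  rw [normLeb, Measure.smul_apply, comap_subtype_coe_apply measurableSet_Icc]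
  have : volume (Subtype.val '' bdry d) = 0 := by
    refine measure_mono_null (t := ⋃ i, {f : Fin d → ℝ | f i = 0}) ?_ ?_
    · rintro _ ⟨x, ⟨i, hi⟩, rfl⟩
      exact Set.mem_iUnion.2 ⟨i, hi⟩
    · refine measure_iUnion_null fun i => ?_
      rw [volume_pi]
      exact Measure.pi_hyperplane _ i 0
  rw [this, smul_zero]

lemma measurable_cubeExpand : Measurable (cubeExpand d) := by
  refine Measurable.subtype_mk (measurable_pi_lambda _ fun i => ?_)
  have hc := (continuous_coord (d := d) i).measurable
  exact Measurable.ite ((isOpen_lt (continuous_coord i) continuous_const).measurableSet)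
    ((hc.const_mul 2).add_const 1) ((hc.const_mul 2).sub_const 1)

lemma eventually_sign {x : UnitCube d} (hx : x ∉ bdry d) :
    ∀ᶠ y : UnitCube d in 𝓝 x, ∀ i, ((y : Fin d → ℝ) i < 0 ↔ (x : Fin d → ℝ) i < 0) := by
  rw [eventually_all]
  intro i
  have hi : (x : Fin d → ℝ) i ≠ 0 := fun h => hx ⟨i, h⟩
  have hc := (continuous_coord (d := d) i).tendsto x
  rcases lt_or_gt_of_ne hi with h | h
  · filter_upwards [hc.eventually (gt_mem_nhds h)] with y hy
    exact ⟨fun _ => h, fun _ => hy⟩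
  · filter_upwards [hc.eventually (lt_mem_nhds h)] with y hy
    exact ⟨fun h' => absurd h' hy.not_gt, fun h' => absurd h' h.not_gt⟩

lemma cubeOf_congr {x y : UnitCube d} (h : ∀ i, ((y : Fin d → ℝ) i < 0 ↔ (x : Fin d → ℝ) i < 0)) :
    cubeOf d y = cubeOf d x := by
  ext z; simp [cubeOf, h]

lemma continuousAt_cubeExpand {x : UnitCube d} (hx : x ∉ bdry d) :
    ContinuousAt (cubeExpand d) x := by
  rw [Topology.IsInducing.subtypeVal.continuousAt_iff, continuousAt_pi]
  intro i
  have hc := (continuous_coord (d := d) i)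
  by_cases h : (x : Fin d → ℝ) i < 0
  · refine (((hc.const_mul 2).add_const 1).continuousAt).congr ?_
    filter_upwards [eventually_sign hx] with y hy
    simp [cubeExpand, (hy i).2 h]
  · refine (((hc.const_mul 2).sub (continuous_const (y := (1 : ℝ)))).continuousAt).congr ?_
    filter_upwards [eventually_sign hx] with y hy
    simp [cubeExpand, mt (hy i).1 h]

lemma mem_interior_cubeOf {x y : UnitCube d} (hy : y ∉ bdry d) (h : y ∈ cubeOf d x) :
    cubeOf d x ∈ 𝓝 y := by
  filter_upwards [eventually_sign hy] with z hz i
  exact (hz i).trans (h i)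

lemma frontier_cubeOf (x : UnitCube d) : frontier (cubeOf d x) ⊆ bdry d := by
  intro y hy
  by_contra hb
  have hev : cubeOf d y ∈ 𝓝 y := mem_interior_cubeOf hb (fun i => Iff.rfl)
  by_cases h : y ∈ cubeOf d x
  · exact hy.2 (mem_interior_iff_mem_nhds.2 (mem_interior_cubeOf hb h))
  · obtain ⟨z, hz1, hz2⟩ := mem_closure_iff_nhds.1 hy.1 _ hev
    exact h fun i => (hz1 i).symm.trans (hz2 i)

/-- The measure part of `magnify` when normalization is possible. -/
lemma magnify_fst {p : Xi d} (hp : (p.1 : Measure (UnitCube d)) (cubeOf d p.2) ≠ 0) :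
    ((magnify d p).1 : Measure (UnitCube d)) =
      ((p.1 : Measure (UnitCube d)) (cubeOf d p.2))⁻¹ •
        ((p.1 : Measure (UnitCube d)).restrict (cubeOf d p.2)).map (cubeExpand d) := by
  have h : IsProbabilityMeasure
      ((((p.1 : Measure (UnitCube d)) (cubeOf d p.2))⁻¹ •
        ((p.1 : Measure (UnitCube d)).restrict (cubeOf d p.2)).map (cubeExpand d))) := by
    constructor
    rw [Measure.smul_apply, Measure.map_apply measurable_cubeExpand .univ, Set.preimage_univ,
      Measure.restrict_apply_univ, smul_eq_mul, ENNReal.inv_mul_cancel hp (measure_ne_top _ _)]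
  rw [magnify, dif_pos h]
  rfl

lemma magnify_fst_apply {p : Xi d} (hp : (p.1 : Measure (UnitCube d)) (cubeOf d p.2) ≠ 0)
    {U : Set (UnitCube d)} (hU : MeasurableSet U) :
    ((magnify d p).1 : Measure (UnitCube d)) U =
      ((p.1 : Measure (UnitCube d)) (cubeOf d p.2))⁻¹ *
        (p.1 : Measure (UnitCube d)) (cubeExpand d ⁻¹' U ∩ cubeOf d p.2) := by
  rw [magnify_fst hp, Measure.smul_apply, Measure.map_apply measurable_cubeExpand hU,
    Measure.restrict_apply (measurable_cubeExpand hU), smul_eq_mul]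

lemma magnify_snd (p : Xi d) : (magnify d p).2 = cubeExpand d p.2 := by
  unfold magnify
  split_ifs <;> rfl

/-- `magnify` is continuous at good points. -/
lemma continuousAt_magnify {p : Xi d} (h1 : p.2 ∉ bdry d)
    (h2 : (p.1 : Measure (UnitCube d)) (bdry d) = 0)
    (h3 : (p.1 : Measure (UnitCube d)) (cubeOf d p.2) ≠ 0) : ContinuousAt (magnify d) p := by
  have hsnd : ContinuousAt (fun q : Xi d => (magnify d q).2) p := by
    simp only [magnify_snd]
    exact ContinuousAt.comp (f := Prod.snd) (continuousAt_cubeExpand h1) continuousAt_snd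
  have hfst : ContinuousAt (fun q : Xi d => (magnify d q).1) p := by
    have hlim : Tendsto (fun q : Xi d => q.1) (𝓝 p) (𝓝 p.1) := continuousAt_fst
    have hD : Tendsto (fun q : Xi d => (q.1 : Measure (UnitCube d)) (cubeOf d p.2)) (𝓝 p)
        (𝓝 ((p.1 : Measure (UnitCube d)) (cubeOf d p.2))) :=
      ProbabilityMeasure.tendsto_measure_of_null_frontier_of_tendsto' hlim
        (measure_mono_null (frontier_cubeOf _) h2)
    have hne := hD.eventually_ne h3
    have hcube : ∀ᶠ q : Xi d in 𝓝 p, cubeOf d q.2 = cubeOf d p.2 := by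
      have := (continuous_snd.tendsto p).eventually (eventually_sign h1)
      filter_upwards [this] with q hq using cubeOf_congr hq
    refine tendsto_of_forall_isOpen_le_liminf' fun U hU => ?_
    rw [magnify_fst_apply h3 hU.measurableSet]
    have hA : (p.1 : Measure (UnitCube d)) (cubeExpand d ⁻¹' U ∩ cubeOf d p.2) ≤
        (𝓝 p).liminf fun q : Xi d =>
          (q.1 : Measure (UnitCube d)) (cubeExpand d ⁻¹' U ∩ cubeOf d p.2) := by
      refine le_liminf_of_interior hlim ?_
      have hb : ∀ᵐ x ∂(p.1 : Measure (UnitCube d)), x ∉ bdry d := measure_eq_zero_iff_ae_notMem.1 h2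
      filter_upwards [hb] with x hx hxA
      rw [mem_interior_iff_mem_nhds]
      exact inter_mem ((continuousAt_cubeExpand hx) (hU.mem_nhds hxA.1))
        (mem_interior_cubeOf hx hxA.2)
    have hI := (tendsto_inv_iff.2 hD).liminf_eq
    rw [← hI]
    refine (mul_le_mul_right hA _).trans (ENNReal.le_liminf_mul.trans ?_)
    refine liminf_le_liminf ?_
    filter_upwards [hne, hcube] with q hq1 hq2
    rw [magnify_fst_apply (by rwa [hq2]) hU.measurableSet, hq2]
    rfl
  exact hfst.prodMk hsnd

lemma ae_good {Q : Measure (Xi d)} [IsProbabilityMeasure Q] (hA : Adapted d Q)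
    (hL : HasLebesgueIntensity d Q) : ∀ᵐ p ∂Q, ContinuousAt (magnify d) p := by
  have h1 : ∀ᵐ p ∂Q, p.2 ∉ bdry d := by
    refine ae_of_ae_map (p := fun x => x ∉ bdry d) measurable_snd.aemeasurable ?_
    rw [(intensity_iff hA).1 hL]
    exact measure_eq_zero_iff_ae_notMem.1 normLeb_bdry
  have hmeas : ∀ A : Set (UnitCube d), MeasurableSet A → Measurable
      fun ν : ProbabilityMeasure (UnitCube d) => (ν : Measure (UnitCube d)) A := fun A hA =>
    (Measure.measurable_coe hA).comp measurable_coe_pm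
  have h2 : ∀ᵐ p ∂Q, (p.1 : Measure (UnitCube d)) (bdry d) = 0 := by
    refine ae_of_ae_map (p := fun ν : ProbabilityMeasure (UnitCube d) =>
      (ν : Measure (UnitCube d)) (bdry d) = 0) measurable_fst.aemeasurable ?_
    have := hL (bdry d) measurableSet_bdry
    rw [normLeb_bdry, lintegral_eq_zero_iff (hmeas _ measurableSet_bdry)] at this
    exact this
  have h3 : ∀ᵐ p ∂Q, ∀ s : Set (Fin d),
      p ∉ {ν : ProbabilityMeasure (UnitCube d) | (ν : Measure (UnitCube d)) (cell s) = 0}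
        ×ˢ cell s := by
    rw [ae_all_iff]
    intro s
    refine measure_eq_zero_iff_ae_notMem.1 ?_
    have hs : MeasurableSet {ν : ProbabilityMeasure (UnitCube d) |
        (ν : Measure (UnitCube d)) (cell s) = 0} :=
      hmeas _ (measurableSet_cell s) (measurableSet_singleton 0)
    rw [apply_prod hA hs (measurableSet_cell s)]
    exact setLIntegral_eq_zero hs fun ν hν => hν
  filter_upwards [h1, h2, h3] with p hp1 hp2 hp3
  refine continuousAt_magnify hp1 hp2 fun h0 => ?_
  exact hp3 {i | (p.2 : Fin d → ℝ) i < 0} ⟨h0, fun i => Iff.rfl⟩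

lemma limit (Qn : ℕ → ProbabilityMeasure (Xi d)) (Q : ProbabilityMeasure (Xi d))
    (h : ∀ n, IsCPD d (Qn n : Measure (Xi d))) (hQ : Tendsto Qn atTop (𝓝 Q)) :
    MeasurePreserving (magnify d) (Q : Measure (Xi d)) (Q : Measure (Xi d)) ∧
      Adapted d (Q : Measure (Xi d)) ∧ HasLebesgueIntensity d (Q : Measure (Xi d)) := by
  have hA := adapted_limit (fun n => (h n).2.2.1) hQ
  have hL : HasLebesgueIntensity d (Q : Measure (Xi d)) := (intensity_iff hA).2
    (intensity_limit (fun n => (intensity_iff (h n).2.2.1).1 (h n).2.2.2) hQ)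
  have hM : Measurable (magnify d) := (h 0).2.1.measurable
  refine ⟨⟨hM, ?_⟩, hA, hL⟩
  have hlim : Tendsto Qn atTop (𝓝 (Q.map hM.aemeasurable)) := by
    refine tendsto_of_forall_isOpen_le_liminf' fun G hG => ?_
    rw [ProbabilityMeasure.toMeasure_map, Measure.map_apply hM hG.measurableSet]
    have : ∀ n, (Qn n : Measure (Xi d)) G = (Qn n : Measure (Xi d)) (magnify d ⁻¹' G) := fun n =>
      ((h n).2.1.measure_preimage hG.measurableSet.nullMeasurableSet).symm
    simp only [this]
    refine le_liminf_of_interior hQ ?_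
    filter_upwards [ae_good hA hL] with p hp hpG
    exact mem_interior_iff_mem_nhds.2 (hp (hG.mem_nhds hpG))
  have := tendsto_nhds_unique hlim hQ
  exact congrArg Subtype.val this

end CPClosed

/-- The set of CP distributions is closed in `𝒫(Ξ)` with the weak topology; in
particular, a weak limit of CP distributions is `M`-invariant, adapted, and has
Lebesgue intensity. -/
theorem isClosed_isCPD (d : ℕ) :
    IsClosed {Q : ProbabilityMeasure (Xi d) | IsCPD d (Q : Measure (Xi d))} ∧
    ∀ (Qn : ℕ → ProbabilityMeasure (Xi d)) (Q : ProbabilityMeasure (Xi d)),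
      (∀ n, IsCPD d (Qn n : Measure (Xi d))) → Tendsto Qn atTop (nhds Q) →
      MeasurePreserving (magnify d) (Q : Measure (Xi d)) (Q : Measure (Xi d)) ∧
        Adapted d (Q : Measure (Xi d)) ∧ HasLebesgueIntensity d (Q : Measure (Xi d)) := by
  refine ⟨?_, CPClosed.limit⟩
  refine IsSeqClosed.isClosed fun Qn Q h hQ => ?_
  exact ⟨inferInstance, CPClosed.limit Qn Q h hQ⟩
end
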